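/- Let m, n > 0 be integers. The subposet of the m-Tamari lattice T_n^(m) induced on its meet-irreducible elements is order-isomorphic to the subposet of the m-cover poset T_n^⟨m⟩ (of the Tamari lattice T_n = T_n^(1)) induced on its meet-irreducible elements; likewise, the subposet of T_n^(m) induced on its join-irreducible elements is order-isomorphic to the subposet of T_n^⟨m⟩ induced on its join-irreducible elements. -/

import Mathlib

/-- The set `D_n^(m)` of m-Dyck paths of length `(m+1)n`, encoded as step sequences:
weakly increasing `u : Fin n → ℕ` with `u_k ≤ m(k−1)` (1-indexed), i.e. `u k ≤ m·k`
(0-indexed). -/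
def DyckM (m n : ℕ) : Type :=
  {u : Fin n → ℕ // Monotone u ∧ ∀ k : Fin n, u k ≤ m * (k : ℕ)}

/-- The rotation cover relation on step sequences: `v` is obtained from `u` by choosing a
position `i ≥ 2` (1-indexed; here `i ≥ 1`, 0-indexed) with `u_{i−1} < u_i` and
decreasing every entry of the primitive subsequence of `u` at position `i` (which ends
at position `k`) by one. -/
def RotCovBy (m n : ℕ) (u v : Fin n → ℕ) : Prop :=
  ∃ i k : Fin n, (0 : ℕ) < (i : ℕ) ∧ (i : ℕ) ≤ (k : ℕ) ∧
    (∀ j : Fin n, (j : ℕ) + 1 = (i : ℕ) → u j < u i) ∧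
    (∀ j : Fin n, (i : ℕ) < (j : ℕ) → (j : ℕ) ≤ (k : ℕ) →
      u j - u i < m * ((j : ℕ) - (i : ℕ))) ∧
    ((k : ℕ) + 1 = n ∨
      ∀ j : Fin n, (j : ℕ) = (k : ℕ) + 1 → m * ((j : ℕ) - (i : ℕ)) ≤ u j - u i) ∧
    (∀ j : Fin n, v j = if (i : ℕ) ≤ (j : ℕ) ∧ (j : ℕ) ≤ (k : ℕ) then u j - 1 else u j)

/-- The rotation order `≤_rot` on `D_n^(m)`: the reflexive-transitive closure of the
rotation cover relation.  The m-Tamari lattice is `T_n^(m) = (D_n^(m), ≤_rot)`. -/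
def TamariLe (m n : ℕ) : DyckM m n → DyckM m n → Prop :=
  Relation.ReflTransGen (fun a b => RotCovBy m n a.1 b.1)

/-- `b` covers `a` with respect to the relation `r` (playing the role of `≤`). -/
def RelCovBy {β : Type*} (r : β → β → Prop) (a b : β) : Prop :=
  r a b ∧ a ≠ b ∧ ∀ c, r a c → r c b → c = a ∨ c = b

/-- `x` is meet-irreducible w.r.t. the order relation `r`: non-maximal with exactly one
upper cover. -/
def RelMeetIrred {β : Type*} (r : β → β → Prop) (x : β) : Prop :=
  (∃ y, r x y ∧ x ≠ y) ∧ ∃! y, RelCovBy r x y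

/-- `x` is join-irreducible w.r.t. the order relation `r`: non-minimal with exactly one
lower cover. -/
def RelJoinIrred {β : Type*} (r : β → β → Prop) (x : β) : Prop :=
  (∃ y, r y x ∧ x ≠ y) ∧ ∃! y, RelCovBy r y x

/-- The defining shape of elements of the m-cover poset of the Tamari lattice `T_n`:
tuples `(0̂^{l₀}, p₁^{l₁}, p₂^{l₂})` with `p₁ ⋖ p₂` a cover relation of `T_n` and `0̂`
the least element of `T_n`. -/
def IsTamariCoverTuple (m n : ℕ) (f : Fin m → DyckM 1 n) : Prop :=
  ∃ (z : DyckM 1 n) (l₀ l₁ l₂ : ℕ) (p₁ p₂ : DyckM 1 n),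
    (∀ x, TamariLe 1 n z x) ∧ l₀ + l₁ + l₂ = m ∧ RelCovBy (TamariLe 1 n) p₁ p₂ ∧
    ∀ i : Fin m, f i = if (i : ℕ) < l₀ then z else if (i : ℕ) < l₀ + l₁ then p₁ else p₂

/-- The m-cover poset `T_n^⟨m⟩` of the Tamari lattice `T_n`. -/
def TamariMCover (m n : ℕ) : Type :=
  {f : Fin m → DyckM 1 n // IsTamariCoverTuple m n f}

/-- The componentwise order on the m-cover poset `T_n^⟨m⟩`. -/
def TamariMCoverLe (m n : ℕ) (f g : TamariMCover m n) : Prop :=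
  ∀ i : Fin m, TamariLe 1 n (f.1 i) (g.1 i)

/-!
Describe a path by its heights `m * j - u_j`. A rotation raises the heights along one primitive
subsequence by one, and `u ≤ v` in the rotation order if and only if every relation
"`u_l` is more than `t` higher than `u_i` for all `i < l ≤ j`" with `t < m` passes from `u` to `v`.
Upper covers correspond to ascents, so the meet-irreducible paths are the `(0^i, c^(n-i))` with
`0 < c ≤ m i`. Dually, the join-irreducible paths are those whose heights are a constant
`0 < s ≤ m` on an interval `i < j ≤ k` and `0` elsewhere.

In the cover poset of a finite bounded poset, an irreducible tuple `f` can be moved in at most one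
position. This makes the join-irreducibles the tuples `(⊥^(m-s), p^s)` with `s > 0` and `p`
join-irreducible. If moreover `⊥` has a unique upper cover only when that cover is `⊤`, and dually,
as holds in the Tamari lattices, then the meet-irreducibles are the tuples `(p^l, q^(m-l))` with
`l > 0` and `q` the unique upper cover of `p`.

Writing `c = m a + l` with `0 < l ≤ m`, the path `(0^i, c^(n-i))` corresponds to the tuple of `l`
copies of `(0^i, (a+1)^(n-i))` followed by `m - l` copies of `(0^i, a^(n-i))`, whose `k`-th entry is
`⌈(c - k) / m⌉`. The block path `(i, k, s)` corresponds to `(⊥^(m-s), p^s)` with `p` the block path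
`(i, k, 1)`. On both sides the order is the same order on the parameters.
-/

section Covers

variable {α : Type*} [PartialOrder α]

theorem relCovBy_iff_covBy {a b : α} : RelCovBy (· ≤ ·) a b ↔ a ⋖ b := by
  rw [covBy_iff_lt_and_eq_or_eq, lt_iff_le_and_ne]
  simp only [RelCovBy, and_assoc]

theorem covBy_of_isLeast_Ioi {x y : α} (h : IsLeast (Set.Ioi x) y) : x ⋖ y :=
  ⟨h.1, fun _ hxz hzy => (h.2 hxz).not_gt hzy⟩

theorem covBy_of_isGreatest_Iio {x y : α} (h : IsGreatest (Set.Iio y) x) : x ⋖ y :=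
  ⟨h.1, fun _ hxz hzy => (h.2 hzy).not_gt hxz⟩

theorem existsUnique_covBy_iff [IsStronglyAtomic α] {x : α} :
    (∃! y, x ⋖ y) ↔ ∃ y, IsLeast (Set.Ioi x) y := by
  refine ⟨fun ⟨y, hxy, unique⟩ => ⟨y, hxy.lt, fun z hz => ?_⟩, fun ⟨y, hxy⟩ =>
    ⟨y, covBy_of_isLeast_Ioi hxy, fun z hxz => ?_⟩⟩
  · obtain ⟨w, hxw, hwz⟩ := exists_covBy_le_of_lt hz
    exact unique w hxw ▸ hwz
  · exact ((hxy.2 hxz.lt).eq_or_lt.resolve_right (hxz.2 hxy.1)).symm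

theorem existsUnique_covBy_iff' [IsStronglyCoatomic α] {x : α} :
    (∃! y, y ⋖ x) ↔ ∃ y, IsGreatest (Set.Iio x) y := by
  refine ⟨fun ⟨y, hyx, unique⟩ => ⟨y, hyx.lt, fun z hz => ?_⟩, fun ⟨y, hyx⟩ =>
    ⟨y, covBy_of_isGreatest_Iio hyx, fun z hzx => ?_⟩⟩
  · obtain ⟨w, hzw, hwx⟩ := exists_le_covBy_of_lt hz
    exact unique w hwx ▸ hzw
  · exact (hyx.2 hzx.lt).eq_or_lt.resolve_right fun hzy => hzx.2 hzy hyx.1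

theorem relMeetIrred_iff [IsStronglyAtomic α] {x : α} :
    RelMeetIrred (· ≤ ·) x ↔ ∃ y, IsLeast (Set.Ioi x) y := by
  simp only [RelMeetIrred, relCovBy_iff_covBy, existsUnique_covBy_iff, ← lt_iff_le_and_ne]
  exact and_iff_right_of_imp fun ⟨y, hy⟩ => ⟨y, hy.1⟩

theorem relJoinIrred_iff [IsStronglyCoatomic α] {x : α} :
    RelJoinIrred (· ≤ ·) x ↔ ∃ y, IsGreatest (Set.Iio x) y := by
  simp only [RelJoinIrred, relCovBy_iff_covBy, existsUnique_covBy_iff', ne_comm (a := x),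
    ← lt_iff_le_and_ne]
  exact and_iff_right_of_imp fun ⟨y, hy⟩ => ⟨y, hy.1⟩

theorem relMeetIrred_subtype_iff {p : α → Prop} [Finite {a // p a}] {x : {a // p a}} :
    RelMeetIrred (fun a b : {a // p a} => a.1 ≤ b.1) x ↔
      ∃ y, IsLeast ({a | p a} ∩ Set.Ioi x.1) y := by
  refine relMeetIrred_iff.trans ⟨fun ⟨y, hxy, least⟩ =>
    ⟨y, ⟨y.2, hxy⟩, fun z hz => least (a := ⟨z, hz.1⟩) hz.2⟩, fun ⟨y, hxy, least⟩ =>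
    ⟨⟨y, hxy.1⟩, hxy.2, fun z hz => least ⟨z.2, hz⟩⟩⟩

theorem relJoinIrred_subtype_iff {p : α → Prop} [Finite {a // p a}] {x : {a // p a}} :
    RelJoinIrred (fun a b : {a // p a} => a.1 ≤ b.1) x ↔
      ∃ y, IsGreatest ({a | p a} ∩ Set.Iio x.1) y := by
  refine relJoinIrred_iff.trans ⟨fun ⟨y, hyx, greatest⟩ =>
    ⟨y, ⟨y.2, hyx⟩, fun z hz => greatest (a := ⟨z, hz.1⟩) hz.2⟩, fun ⟨y, hyx, greatest⟩ =>
    ⟨⟨y, hyx.1⟩, hyx.2, fun z hz => greatest ⟨z.2, hz⟩⟩⟩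

theorem range_val_relMeetIrred_subtype {p : α → Prop} [Finite {a // p a}] :
    Set.range (fun x : {x // RelMeetIrred (fun a b : {a // p a} => a.1 ≤ b.1) x} => x.1.1) =
      {a | p a ∧ ∃ y, IsLeast ({a | p a} ∩ Set.Ioi a) y} :=
  Set.ext fun a => ⟨fun ⟨x, hx⟩ => hx ▸ ⟨x.1.2, relMeetIrred_subtype_iff.1 x.2⟩,
    fun ⟨ha, h⟩ => ⟨⟨⟨a, ha⟩, relMeetIrred_subtype_iff.2 h⟩, rfl⟩⟩

theorem range_val_relJoinIrred_subtype {p : α → Prop} [Finite {a // p a}] :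
    Set.range (fun x : {x // RelJoinIrred (fun a b : {a // p a} => a.1 ≤ b.1) x} => x.1.1) =
      {a | p a ∧ ∃ y, IsGreatest ({a | p a} ∩ Set.Iio a) y} :=
  Set.ext fun a => ⟨fun ⟨x, hx⟩ => hx ▸ ⟨x.1.2, relJoinIrred_subtype_iff.1 x.2⟩,
    fun ⟨ha, h⟩ => ⟨⟨⟨a, ha⟩, relJoinIrred_subtype_iff.2 h⟩, rfl⟩⟩

end Covers

theorem existsUnique_exists_comm_of_biUnique {α β : Type*} {R : α → β → Prop}
    (hR : Relator.BiUnique R) : (∃! a, ∃ b, R a b) ↔ ∃! b, ∃ a, R a b := by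
  constructor
  · rintro ⟨a, ⟨b, hab⟩, unique⟩
    refine ⟨b, ⟨a, hab⟩, fun b' ⟨a', hab'⟩ => hR.right ?_ hab⟩
    exact unique a' ⟨b', hab'⟩ ▸ hab'
  · rintro ⟨b, ⟨a, hab⟩, unique⟩
    refine ⟨a, ⟨b, hab⟩, fun a' ⟨b', hab'⟩ => hR.left ?_ hab⟩
    exact unique b' ⟨a', hab'⟩ ▸ hab'

theorem exists_equiv_of_parametrizations {ι α β X Y : Type*} [PartialOrder α] [PartialOrder β]
    {s : Set ι} {f : ι → α} {g : ι → β} {φ : X → α} {ψ : Y → β}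
    (hφ : φ.Injective) (hψ : ψ.Injective) (φ_range : Set.range φ = f '' s)
    (ψ_range : Set.range ψ = g '' s)
    (hfg : ∀ a ∈ s, ∀ b ∈ s, f a ≤ f b ↔ g a ≤ g b) :
    ∃ e : X ≃ Y, ∀ x y, φ x ≤ φ y ↔ ψ (e x) ≤ ψ (e y) := by
  have lift (x : X) : ∃ y, ∃ a ∈ s, f a = φ x ∧ g a = ψ y := by
    obtain ⟨a, ha, hax⟩ := φ_range ▸ Set.mem_range_self x
    obtain ⟨y, hy⟩ := ψ_range ▸ Set.mem_image_of_mem g ha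
    exact ⟨y, a, ha, hax, hy.symm⟩
  choose e a has hfa hga using lift
  have he (x y : X) : φ x ≤ φ y ↔ ψ (e x) ≤ ψ (e y) := by
    rw [← hfa, ← hfa, ← hga, ← hga, hfg _ (has x) _ (has y)]
  refine ⟨Equiv.ofBijective e ⟨fun x y hxy => hφ ?_, fun y => ?_⟩, he⟩
  · exact le_antisymm ((he x y).2 (hxy ▸ le_rfl)) ((he y x).2 (hxy ▸ le_rfl))
  · obtain ⟨b, hb, hby⟩ := ψ_range ▸ Set.mem_range_self y
    obtain ⟨x, hx⟩ := φ_range ▸ Set.mem_image_of_mem f hb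
    refine ⟨x, hψ (le_antisymm ?_ ?_)⟩
    · rw [← hga, ← hby, ← hfg _ (has x) _ hb, hfa, hx]
    · rw [← hga, ← hby, ← hfg _ hb _ (has x), hfa, hx]

namespace DyckM

variable {m n : ℕ} {u v w : DyckM m n} {i j k : ℕ}

/-- The horizontal distance `m * j - u_j` between the `j`-th north step of the path `u` (0-indexed)
and the diagonal `x = m y`. It is `0` for `j ≥ n`, so that the end of the path closes every
primitive subsequence. -/
def height (u : DyckM m n) (j : ℕ) : ℕ :=
  if hj : j < n then m * j - u.1 ⟨j, hj⟩ else 0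

theorem val_add_height (u : DyckM m n) (j : Fin n) : u.1 j + u.height j = m * j := by
  rw [height, dif_pos j.2]
  exact Nat.add_sub_cancel' (u.2.2 j)

theorem height_of_le (u : DyckM m n) (hj : n ≤ j) : u.height j = 0 :=
  dif_neg hj.not_gt

theorem lt_of_height_pos (hj : 0 < u.height j) : j < n :=
  lt_of_not_ge fun h => hj.ne' (u.height_of_le h)

theorem height_le (u : DyckM m n) (j : ℕ) : u.height j ≤ m * j := by
  unfold height
  split_ifs <;> omega

@[simp]
theorem height_zero (u : DyckM m n) : u.height 0 = 0 :=
  Nat.le_zero.1 (u.height_le 0)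

theorem height_succ_le (u : DyckM m n) (j : ℕ) : u.height (j + 1) ≤ u.height j + m := by
  rcases lt_or_ge (j + 1) n with hj | hj
  · have h₀ := u.val_add_height ⟨j, by omega⟩
    have h₁ := u.val_add_height ⟨j + 1, hj⟩
    have mono : u.1 ⟨j, by omega⟩ ≤ u.1 ⟨j + 1, hj⟩ := u.2.1 (Nat.le_succ j)
    simp only [mul_add_one] at h₀ h₁
    omega
  · simp [u.height_of_le hj]

theorem ext_height (h : ∀ j < n, u.height j = v.height j) : u = v := by
  refine Subtype.ext (funext fun j => ?_)
  have := u.val_add_height j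
  have := v.val_add_height j
  have := h j j.2
  omega

/-- The path with heights `h`, provided that `h 0 = 0` and `h j = 0` for `j ≥ n`. -/
def ofHeight (n : ℕ) (h : ℕ → ℕ) (h_succ : ∀ j, h (j + 1) ≤ h j + m) :
    DyckM m n :=
  ⟨fun j => m * j - h j, by
    have mono : Monotone fun j : ℕ => m * j - h j := monotone_nat_of_le_succ fun j => by
      have := h_succ j
      simp only [mul_add_one]
      omega
    exact fun i j hij => mono hij, fun _ => Nat.sub_le _ _⟩

theorem height_ofHeight {h : ℕ → ℕ} {h_succ : ∀ j, h (j + 1) ≤ h j + m} (h_zero : h 0 = 0)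
    (h_end : ∀ j, n ≤ j → h j = 0) (j : ℕ) : (ofHeight n h h_succ).height j = h j := by
  rcases lt_or_ge j n with hj | hj
  · have h_le : ∀ j, h j ≤ m * j := fun j => by
      induction j with
      | zero => exact h_zero.le
      | succ j ih =>
        rw [mul_add_one]
        exact (h_succ j).trans (Nat.add_le_add_right ih m)
    rw [height, dif_pos hj]
    exact Nat.sub_sub_self (h_le j)
  · rw [height_of_le _ hj, h_end j hj]

/-- The positions at which a path can be rotated: the `i`-th north step is preceded by an east
step. -/
def IsAscent (u : DyckM m n) (i : ℕ) : Prop :=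
  0 < i ∧ i < n ∧ u.height i < u.height (i - 1) + m

/-- `v` is obtained from `u` by rotating the primitive subsequence at positions `i, …, k`. -/
structure IsRotation (u v : DyckM m n) (i k : ℕ) : Prop where
  isAscent : u.IsAscent i
  le : i ≤ k
  lt : k < n
  lt_height : ∀ j, i < j → j ≤ k → u.height i < u.height j
  height_succ_le : u.height (k + 1) ≤ u.height i
  height_eq : ∀ j, v.height j = u.height j + if i ≤ j ∧ j ≤ k then 1 else 0

theorem val_lt_val_iff {i j : Fin n} (hij : (j : ℕ) + 1 = i) :
    u.1 j < u.1 i ↔ u.height i < u.height j + m := by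
  have hi := u.val_add_height i
  have hj := u.val_add_height j
  rw [← hij, mul_add_one, hij] at hi
  omega

theorem val_sub_val_lt_iff {i j : Fin n} (hij : i ≤ j) :
    u.1 j - u.1 i < m * ((j : ℕ) - (i : ℕ)) ↔ u.height i < u.height j := by
  have hi := u.val_add_height i
  have hj := u.val_add_height j
  have mono := u.2.1 hij
  rw [Nat.mul_sub]
  omega

theorem isAscent_iff_val {i : Fin n} (hi : 0 < (i : ℕ)) :
    u.IsAscent i ↔ ∀ j : Fin n, (j : ℕ) + 1 = i → u.1 j < u.1 i := by
  refine ⟨fun h j hji => (val_lt_val_iff hji).2 ?_, fun h => ⟨hi, i.2, ?_⟩⟩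
  · simpa only [← hji, Nat.add_sub_cancel] using h.2.2
  · have hji : (i : ℕ) - 1 + 1 = i := Nat.sub_add_cancel hi
    exact (val_lt_val_iff (j := ⟨i - 1, by omega⟩) hji).1 (h _ hji)

theorem IsAscent.val_pos {j : Fin n} (hi : u.IsAscent i) (hij : i ≤ j) : 0 < u.1 j := by
  have prev_lt : u.1 ⟨i - 1, by have := hi.2.1; omega⟩ < u.1 ⟨i, hi.2.1⟩ :=
    (val_lt_val_iff (Nat.sub_add_cancel hi.1)).2 hi.2.2
  exact (Nat.zero_le _).trans_lt prev_lt |>.trans_le (u.2.1 hij)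

theorem IsAscent.val_eq_iff (hi : u.IsAscent i) (hk : k < n) :
    (∀ j : Fin n, v.1 j = if i ≤ (j : ℕ) ∧ (j : ℕ) ≤ k then u.1 j - 1 else u.1 j) ↔
      ∀ j, v.height j = u.height j + if i ≤ j ∧ j ≤ k then 1 else 0 := by
  have val_iff (j : Fin n) : (v.1 j = if i ≤ (j : ℕ) ∧ (j : ℕ) ≤ k then u.1 j - 1 else u.1 j) ↔
      v.height j = u.height j + if i ≤ (j : ℕ) ∧ (j : ℕ) ≤ k then 1 else 0 := by
    have hu := u.val_add_height j
    have hv := v.val_add_height j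
    have u_pos : i ≤ (j : ℕ) → 0 < u.1 j := hi.val_pos
    split_ifs <;> omega
  refine ⟨fun h j => ?_, fun h j => (val_iff j).2 (h j)⟩
  rcases lt_or_ge j n with hj | hj
  · exact (val_iff ⟨j, hj⟩).1 (h ⟨j, hj⟩)
  · rw [u.height_of_le hj, v.height_of_le hj, if_neg (by omega)]

theorem rotCovBy_iff : RotCovBy m n u.1 v.1 ↔ ∃ i k, IsRotation u v i k := by
  constructor
  · rintro ⟨i, k, hi, hik, ascent, primitive, last, hv⟩
    have hui := (isAscent_iff_val hi).2 ascent
    refine ⟨i, k, hui, hik, k.2, fun j hij hjk => ?_, ?_, (hui.val_eq_iff k.2).1 hv⟩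
    · lift j to Fin n using by omega
      exact (val_sub_val_lt_iff hij.le).1 (primitive j hij hjk)
    · rcases eq_or_ne ((k : ℕ) + 1) n with hk | hk
      · exact (u.height_of_le hk.ge).trans_le (Nat.zero_le _)
      · let k' : Fin n := ⟨k + 1, by omega⟩
        have hik' : i ≤ k' := Nat.le_succ_of_le hik
        exact not_lt.1 ((val_sub_val_lt_iff hik').not.1 (last.resolve_left hk k' rfl).not_gt)
  · rintro ⟨i, k, hui, hik, hk, lt_height, height_succ_le, hv⟩
    lift k to Fin n using hk
    lift i to Fin n using hui.2.1
    refine ⟨i, k, hui.1, hik, (isAscent_iff_val hui.1).1 hui, fun j hij hjk =>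
      (val_sub_val_lt_iff hij.le).2 (lt_height j hij hjk), or_iff_not_imp_left.2 fun _ j hjk => ?_,
      (hui.val_eq_iff k.2).2 hv⟩
    have hij : i ≤ j := hik.trans (by omega)
    exact not_lt.1 ((val_sub_val_lt_iff hij).not.2 (hjk ▸ height_succ_le).not_gt)

theorem IsRotation.height_le (h : IsRotation u v i k) (j : ℕ) : u.height j ≤ v.height j :=
  h.height_eq j ▸ Nat.le_add_right _ _

theorem height_le_of_tamariLe (h : TamariLe m n u v) (j : ℕ) : u.height j ≤ v.height j := by
  induction h with
  | refl => rfl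
  | tail _ hrot ih =>
    obtain ⟨i, k, hrot⟩ := rotCovBy_iff.1 hrot
    exact ih.trans (hrot.height_le j)

instance : PartialOrder (DyckM m n) where
  le := TamariLe m n
  le_refl _ := .refl
  le_trans _ _ _ := .trans
  le_antisymm _ _ huv hvu := ext_height fun j _ =>
    (height_le_of_tamariLe huv j).antisymm (height_le_of_tamariLe hvu j)

instance : Finite (DyckM m n) :=
  ((Set.finite_Iic fun k : Fin n => m * (k : ℕ)).subset fun _ hu => hu.2).to_subtype

theorem height_mono (huv : u ≤ v) (j : ℕ) : u.height j ≤ v.height j :=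
  height_le_of_tamariLe huv j

theorem IsRotation.lt_right (h : IsRotation u v i k) : u < v := by
  refine lt_of_le_of_ne (.single (rotCovBy_iff.2 ⟨i, k, h⟩)) fun huv => ?_
  simpa [huv, h.le] using h.height_eq i

theorem IsRotation.height_add_le {a b : ℕ} (h : IsRotation u v a b) (hij : i ≤ j)
    (hlt : ∀ l, i < l → l ≤ j → u.height i < u.height l) :
    u.height j + v.height i ≤ v.height j + u.height i := by
  have hi := h.height_eq i
  have hj := h.height_eq j
  have hjb : a ≤ i → i ≤ b → j ≤ b := fun hai hib => by
    by_contra! hbj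
    have hi_lt_succ := hlt (b + 1) (by omega) hbj
    have hai_le : u.height a ≤ u.height i :=
      hai.eq_or_lt.elim (fun e => e ▸ le_rfl) fun hai => (h.lt_height i hai hib).le
    exact (hi_lt_succ.trans_le h.height_succ_le).not_ge hai_le
  split_ifs at hi hj <;> omega

/- Going up never decreases the heights along a primitive subsequence relative to the height at its
first position; this is what distinguishes the rotation order from pointwise comparison. -/
theorem height_add_le_of_le (huv : u ≤ v) (hij : i ≤ j)
    (hlt : ∀ l, i < l → l ≤ j → u.height i < u.height l) :
    u.height j + v.height i ≤ v.height j + u.height i := by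
  induction (show TamariLe m n u v from huv) using Relation.ReflTransGen.head_induction_on with
  | refl => rfl
  | @head u w hrot hwv ih =>
    obtain ⟨a, b, hrot⟩ := rotCovBy_iff.1 hrot
    have hstep := hrot.height_add_le hij hlt
    have hrest := ih hwv fun l hil hlj => by
      have := hrot.height_add_le hil.le fun l' hil' hl' => hlt l' hil' (hl'.trans hlj)
      have := hlt l hil hlj
      omega
    omega

theorem IsRotation.eq_or_eq_of_le (h : IsRotation u v i k) (huw : u ≤ w) (hwv : w ≤ v) :
    w = u ∨ w = v := by
  have outside (j : ℕ) (hj : ¬(i ≤ j ∧ j ≤ k)) : u.height j = w.height j ∧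
      w.height j = v.height j := by
    have step := h.height_eq j
    rw [if_neg hj] at step
    have := height_mono huw j
    have := height_mono hwv j
    omega
  have inside (j : ℕ) (hj : i ≤ j ∧ j ≤ k) : v.height j = u.height j + 1 := by
    rw [h.height_eq j, if_pos hj]
  have hvi := inside i ⟨le_rfl, h.le⟩
  rcases (height_mono huw i).eq_or_lt with hi | hi
  · refine .inl (ext_height fun j _ => ?_)
    by_cases hj : i ≤ j ∧ j ≤ k
    · have := height_add_le_of_le hwv hj.1 fun l hil hlj =>
        hi ▸ (h.lt_height l hil (hlj.trans hj.2)).trans_le (height_mono huw l)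
      have := height_mono huw j
      have := inside j hj
      omega
    · exact (outside j hj).1.symm
  · refine .inr (ext_height fun j _ => ?_)
    by_cases hj : i ≤ j ∧ j ≤ k
    · have := height_add_le_of_le huw hj.1 fun l hil hlj => h.lt_height l hil (hlj.trans hj.2)
      have := height_mono hwv j
      have := inside j hj
      omega
    · exact (outside j hj).2

theorem covBy_iff : u ⋖ v ↔ ∃ i k, IsRotation u v i k := by
  refine ⟨fun huv => ?_, fun ⟨i, k, h⟩ =>
    covBy_iff_lt_and_eq_or_eq.2 ⟨h.lt_right, fun _ => h.eq_or_eq_of_le⟩⟩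
  obtain heq | ⟨w, huw, hwv⟩ := (show TamariLe m n u v from huv.le).cases_head
  · exact absurd heq huv.ne
  · obtain ⟨i, k, huw⟩ := rotCovBy_iff.1 huw
    obtain rfl := (huv.eq_or_eq huw.lt_right.le hwv).resolve_left huw.lt_right.ne'
    exact ⟨i, k, huw⟩

theorem exists_primitive_end (u : DyckM m n) (hi : i < n) :
    ∃ k, i ≤ k ∧ k < n ∧ (∀ j, i < j → j ≤ k → u.height i < u.height j) ∧
      u.height (k + 1) ≤ u.height i := by
  have ends : ∃ k, i ≤ k ∧ u.height (k + 1) ≤ u.height i :=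
    ⟨n - 1, by omega, (u.height_of_le (by omega)).trans_le (Nat.zero_le _)⟩
  classical
  obtain ⟨hik, height_end⟩ := Nat.find_spec ends
  refine ⟨Nat.find ends, hik, ?_, fun j hij hjk => ?_, height_end⟩
  · have : Nat.find ends ≤ n - 1 := Nat.find_min' ends
      ⟨by omega, (u.height_of_le (by omega)).trans_le (Nat.zero_le _)⟩
    omega
  · have := Nat.find_min ends (m := j - 1) (by omega)
    rw [Nat.sub_add_cancel (by omega)] at this
    omega

theorem isAscent_iff : u.IsAscent i ↔ ∃ v k, IsRotation u v i k := by
  refine ⟨fun hi => ?_, fun ⟨v, k, h⟩ => h.isAscent⟩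
  obtain ⟨k, hik, hk, lt_height, height_end⟩ := u.exists_primitive_end hi.2.1
  have pos := hi.1
  have ascent := hi.2.2
  let h (j : ℕ) := u.height j + if i ≤ j ∧ j ≤ k then 1 else 0
  have h_zero : h 0 = 0 := by simp [h, pos.ne']
  have h_succ (j : ℕ) : h (j + 1) ≤ h j + m := by
    have := u.height_succ_le j
    rcases eq_or_ne (j + 1) i with rfl | hj
    · simp only [Nat.add_sub_cancel] at ascent
      dsimp only [h]
      split_ifs <;> omega
    · dsimp only [h]
      split_ifs <;> omega
  have h_end (j : ℕ) (hj : n ≤ j) : h j = 0 := by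
    simp only [h, u.height_of_le hj, if_neg (show ¬(i ≤ j ∧ j ≤ k) by omega)]
  exact ⟨ofHeight n h h_succ, k, hi, hik, hk, lt_height, height_end, height_ofHeight h_zero h_end⟩

/-- The positions at which a path can be rotated backwards: the heights stay above the one at `i`
until they fall strictly below it. -/
def IsDrop (v : DyckM m n) (i : ℕ) : Prop :=
  0 < v.height i ∧
    ∃ k, i ≤ k ∧ (∀ j, i < j → j ≤ k → v.height i < v.height j) ∧ v.height (k + 1) < v.height i

theorem IsRotation.isDrop (h : IsRotation u v i k) : v.IsDrop i := by
  have hi : v.height i = u.height i + 1 := by rw [h.height_eq, if_pos ⟨le_rfl, h.le⟩]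
  refine ⟨by omega, k, h.le, fun j hij hjk => ?_, ?_⟩
  · rw [hi, h.height_eq j, if_pos ⟨hij.le, hjk⟩]
    exact Nat.succ_lt_succ (h.lt_height j hij hjk)
  · rw [hi, h.height_eq (k + 1), if_neg (by omega)]
    exact Nat.lt_succ_of_le h.height_succ_le

theorem isDrop_iff : v.IsDrop i ↔ ∃ u k, IsRotation u v i k := by
  refine ⟨fun ⟨pos, k, hik, lt_height, height_end⟩ => ?_, fun ⟨u, k, h⟩ => h.isDrop⟩
  have hi : 0 < i := Nat.pos_of_ne_zero fun hi => by simp [hi] at pos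
  have height_le (j : ℕ) (hij : i ≤ j) (hjk : j ≤ k) : v.height i ≤ v.height j :=
    hij.eq_or_lt.elim (fun hij => hij ▸ le_rfl) fun hij => (lt_height j hij hjk).le
  have hk : k < n := lt_of_height_pos (pos.trans_le (height_le k hik le_rfl))
  let h (j : ℕ) := v.height j - if i ≤ j ∧ j ≤ k then 1 else 0
  have h_zero : h 0 = 0 := by simp [h]
  have h_succ (j : ℕ) : h (j + 1) ≤ h j + m := by
    have := v.height_succ_le j
    have : j = k → v.height (j + 1) < v.height j := fun hj =>
      hj ▸ height_end.trans_le (height_le k hik le_rfl)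
    dsimp only [h]
    split_ifs <;> omega
  have h_end (j : ℕ) (hj : n ≤ j) : h j = 0 := by simp [h, v.height_of_le hj]
  have height_h := height_ofHeight (h_succ := h_succ) h_zero h_end
  have h_self : h i = v.height i - 1 := by simp [h, hik]
  have h_pred : h (i - 1) = v.height (i - 1) := by
    simp only [h, if_neg (show ¬(i ≤ i - 1 ∧ i - 1 ≤ k) by omega), Nat.sub_zero]
  refine ⟨ofHeight n h h_succ, k, ⟨hi, by omega, ?_⟩, hik, hk, fun j hij hjk => ?_, ?_, fun j => ?_⟩
  · have := v.height_succ_le (i - 1)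
    rw [Nat.sub_add_cancel hi] at this
    rw [height_h, height_h, h_self, h_pred]
    omega
  · have := lt_height j hij hjk
    simp only [height_h, h_self, h, if_pos (And.intro hij.le hjk)]
    omega
  · simp only [height_h, h_self, h, if_neg (show ¬(i ≤ k + 1 ∧ k + 1 ≤ k) by omega)]
    omega
  · have := height_le j
    simp only [height_h, h]
    split_ifs <;> omega

theorem IsRotation.right_unique (h : IsRotation u v i j) (h' : IsRotation u w i k) : v = w := by
  obtain rfl : j = k := by
    have hj := h.height_succ_le
    have hk := h'.height_succ_le
    have := h.lt_height (k + 1)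
    have := h'.lt_height (j + 1)
    have := h.le
    have := h'.le
    omega
  exact ext_height fun l _ => (h.height_eq l).trans (h'.height_eq l).symm

theorem IsRotation.end_le (h : IsRotation u v i j) (h' : IsRotation w v i k) : k ≤ j := by
  by_contra! hjk
  have := h.le
  have := h.height_succ_le
  have := h'.lt_height (j + 1) (by omega) hjk
  have hi := h.height_eq i
  have hi' := h'.height_eq i
  have hj := h.height_eq (j + 1)
  have hj' := h'.height_eq (j + 1)
  split_ifs at hi hi' hj hj' <;> omega

theorem IsRotation.left_unique (h : IsRotation u v i j) (h' : IsRotation w v i k) : u = w := by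
  obtain rfl : j = k := (h'.end_le h).antisymm (h.end_le h')
  refine ext_height fun l _ => ?_
  exact Nat.add_right_cancel ((h.height_eq l).symm.trans (h'.height_eq l))

theorem IsRotation.pos_unique {i' k' : ℕ} (h : IsRotation u v i k) (h' : IsRotation u v i' k') :
    i = i' := by
  have hi := h.height_eq i
  have hi' := h.height_eq i'
  rw [h'.height_eq] at hi hi'
  have := h.le
  have := h'.le
  split_ifs at hi hi' <;> omega

theorem exists_isLeast_Ioi_iff : (∃ w, IsLeast (Set.Ioi u) w) ↔ ∃! i, u.IsAscent i := by
  have biUnique : Relator.BiUnique fun i v => ∃ k, IsRotation u v i k :=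
    ⟨fun _ _ _ ⟨_, h⟩ ⟨_, h'⟩ => h.pos_unique h', fun _ _ _ ⟨_, h⟩ ⟨_, h'⟩ => h.right_unique h'⟩
  simp only [← existsUnique_covBy_iff, covBy_iff, isAscent_iff]
  exact (existsUnique_exists_comm_of_biUnique biUnique).symm

theorem exists_isGreatest_Iio_iff : (∃ w, IsGreatest (Set.Iio v) w) ↔ ∃! i, v.IsDrop i := by
  have biUnique : Relator.BiUnique fun i u => ∃ k, IsRotation u v i k :=
    ⟨fun _ _ _ ⟨_, h⟩ ⟨_, h'⟩ => h.pos_unique h', fun _ _ _ ⟨_, h⟩ ⟨_, h'⟩ => h.left_unique h'⟩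
  simp only [← existsUnique_covBy_iff', covBy_iff, isDrop_iff]
  exact (existsUnique_exists_comm_of_biUnique biUnique).symm

/-- All north steps at the positions `i < l ≤ j` are more than `t` higher than the `i`-th one. For
`t = 0` this says that they belong to the primitive subsequence at `i`; the rotation order is the
inclusion order of these relations for `t < m`. -/
def Clears (u : DyckM m n) (t i j : ℕ) : Prop :=
  ∀ l, i < l → l ≤ j → u.height i + t < u.height l

theorem Clears.mono_right {t : ℕ} (h : u.Clears t i k) (hjk : j ≤ k) : u.Clears t i j :=
  fun l hil hlj => h l hil (hlj.trans hjk)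

theorem Clears.mono {t : ℕ} (huv : u ≤ v) (h : u.Clears t i j) : v.Clears t i j := by
  intro l hil hlj
  have := h l hil hlj
  have := height_add_le_of_le huv hil.le fun l' hil' hl'l =>
    (Nat.le_add_right _ t).trans_lt (h l' hil' (hl'l.trans hlj))
  omega

theorem exists_clears_of_height_pos (hj : 0 < u.height j) :
    ∃ i < j, ∃ t < m, u.Clears t i j ∧ u.height j = u.height i + t + 1 := by
  let lower (i : ℕ) : Prop := u.height i < u.height j
  let i := Nat.findGreatest lower j
  have hi : u.height i < u.height j :=
    Nat.findGreatest_spec (P := lower) (Nat.zero_le j) (by simpa [lower] using hj)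
  have hij : i < j := (Nat.findGreatest_le j).lt_of_ne fun h => (h ▸ hi).false
  have last (l : ℕ) (hil : i < l) (hlj : l ≤ j) : u.height j ≤ u.height l :=
    not_lt.1 (Nat.findGreatest_is_greatest (P := lower) hil hlj)
  have := last (i + 1) (Nat.lt_succ_self i) hij
  have := u.height_succ_le i
  refine ⟨i, hij, u.height j - u.height i - 1, by omega, fun l hil hlj => ?_, by omega⟩
  have := last l hil hlj
  omega

theorem height_le_of_clears (huv : ∀ t < m, ∀ i j, u.Clears t i j → v.Clears t i j) (j : ℕ) :
    u.height j ≤ v.height j := by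
  induction j using Nat.strong_induction_on with
  | h j ih =>
    rcases (u.height j).eq_zero_or_pos with hj | hj
    · exact hj ▸ Nat.zero_le _
    · obtain ⟨i, hij, t, ht, hclears, hj⟩ := exists_clears_of_height_pos hj
      have := ih i hij
      have := huv t ht i j hclears j hij le_rfl
      omega

theorem IsRotation.clears_or {a t : ℕ} (h : IsRotation u v i k) (hv : v.Clears t a j) :
    u.Clears t a j ∨ a < i ∧ i ≤ j ∧ j ≤ k ∧ u.height i = u.height a + t := by
  refine or_iff_not_imp_left.2 fun hu => ?_
  simp only [Clears, not_forall, not_lt] at hu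
  obtain ⟨l, hal, hlj, hul⟩ := hu
  have hvl := hv l hal hlj
  have ha := h.height_eq a
  have hl := h.height_eq l
  have hai : a < i ∧ i ≤ l ∧ l ≤ k := by split_ifs at ha hl <;> omega
  obtain ⟨hai, hil, hlk⟩ := hai
  rw [if_neg (by omega)] at ha
  have tight : u.height i = u.height a + t := by
    have := hv i hai (hil.trans hlj)
    have hi := h.height_eq i
    rw [if_pos ⟨le_rfl, h.le⟩] at hi
    rcases hil.eq_or_lt with rfl | hil
    · omega
    · have := h.lt_height l hil hlk
      omega
  refine ⟨hai, hil.trans hlj, ?_, tight⟩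
  by_contra! hkj
  have := hv (k + 1) (by omega) hkj
  have := h.height_succ_le
  have hk := h.height_eq (k + 1)
  rw [if_neg (by omega)] at hk
  omega

theorem exists_isRotation_of_clears (huv : ∀ t < m, ∀ i j, u.Clears t i j → v.Clears t i j)
    (hne : u ≠ v) :
    ∃ w i k, IsRotation u w i k ∧ ∀ t < m, ∀ i j, w.Clears t i j → v.Clears t i j := by
  have hle := height_le_of_clears huv
  have differ : ∃ i, u.height i < v.height i := by
    by_contra! h
    exact hne (ext_height fun j _ => (hle j).antisymm (h j))
  classical
  let i := Nat.find differ
  have hi : u.height i < v.height i := Nat.find_spec differ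
  have agree (j : ℕ) (hj : j < i) : u.height j = v.height j :=
    (hle j).antisymm (not_lt.1 (Nat.find_min differ hj))
  have pos : 0 < i := Nat.pos_of_ne_zero fun h => by simp [h] at hi
  have ascent : u.IsAscent i := by
    refine ⟨pos, lt_of_height_pos ((Nat.zero_le _).trans_lt hi), ?_⟩
    have := v.height_succ_le (i - 1)
    rw [Nat.sub_add_cancel pos] at this
    rw [agree (i - 1) (by omega)]
    exact hi.trans_le this
  obtain ⟨w, k, hrot⟩ := isAscent_iff.1 ascent
  refine ⟨w, i, k, hrot, fun t ht a b hw l hal hlb => ?_⟩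
  rcases hrot.clears_or (hw.mono_right hlb) with hu | ⟨hai, hil, hlk, tight⟩
  · exact huv t ht a l hu l hal le_rfl
  · rw [← agree a hai, ← tight]
    rcases hil.eq_or_lt with hil | hil
    · exact hil ▸ hi
    · exact hi.trans (huv 0 (by omega) i l (fun l' hil' hl'l =>
        hrot.lt_height l' hil' (hl'l.trans hlk)) l hil le_rfl)

theorem le_iff : u ≤ v ↔ ∀ t < m, ∀ i j, u.Clears t i j → v.Clears t i j := by
  refine ⟨fun huv t _ i j => Clears.mono huv, fun huv => ?_⟩
  induction u using WellFoundedGT.induction with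
  | ind u ih =>
    by_cases hne : u = v
    · exact hne.le
    · obtain ⟨w, i, k, hrot, hwv⟩ := exists_isRotation_of_clears huv hne
      exact hrot.lt_right.le.trans (ih w hrot.lt_right hwv)

instance : Bot (DyckM m n) where
  bot := ⟨fun j => m * j, fun _ _ hij => Nat.mul_le_mul_left m hij, fun _ => le_rfl⟩

instance : Top (DyckM m n) where
  top := ⟨fun _ => 0, monotone_const, fun _ => Nat.zero_le _⟩

@[simp]
theorem height_bot (j : ℕ) : (⊥ : DyckM m n).height j = 0 := by
  simp [height, Bot.bot]

@[simp]
theorem height_top (hj : j < n) : (⊤ : DyckM m n).height j = m * j := by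
  simp [height, Top.top, hj]

instance : BoundedOrder (DyckM m n) where
  bot_le _ := le_iff.2 fun t _ i j h l hil hlj => by simpa using h l hil hlj
  le_top u := le_iff.2 fun t ht i j h l hil hlj => by
    have hl : l < n := lt_of_height_pos ((Nat.zero_le _).trans_lt (h l hil hlj))
    rw [height_top (hil.trans hl), height_top hl]
    exact (Nat.add_lt_add_left ht _).trans_le (Nat.mul_le_mul_left m hil)

theorem val_eq_of_forall_not_isAscent {i j : Fin n} (hij : i ≤ j)
    (h : ∀ l : Fin n, i < l → l ≤ j → ¬u.IsAscent l) : u.1 i = u.1 j := by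
  obtain ⟨i, hi⟩ := i
  obtain ⟨j, hj⟩ := j
  induction j, (show i ≤ j from hij) using Nat.le_induction with
  | base => rfl
  | succ j hij' ih =>
    have not_ascent := h ⟨j + 1, hj⟩ (Nat.lt_succ_of_le hij') le_rfl
    rw [isAscent_iff_val (Nat.succ_pos j)] at not_ascent
    push Not at not_ascent
    obtain ⟨l, hl, hle⟩ := not_ascent
    obtain rfl : l = ⟨j, Nat.lt_of_succ_lt hj⟩ := Fin.ext (Nat.succ_injective hl)
    rw [ih (Nat.lt_of_succ_lt hj) hij' fun l hil hlj => h l hil (hlj.trans (Nat.le_succ j))]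
    exact (u.2.1 (Nat.le_succ j)).antisymm hle

/-- The path with step sequence `(0^i, c^(n-i))`, where `c` is truncated to its largest possible
value `m * i`. -/
def rectPath (m n i c : ℕ) : DyckM m n :=
  ⟨fun j => if (j : ℕ) < i then 0 else min c (m * i), fun j k (hjk : (j : ℕ) ≤ k) => by
    dsimp only
    split_ifs <;> omega, fun j => by
    dsimp only
    split_ifs with hj
    · exact Nat.zero_le _
    · exact (min_le_right _ _).trans (Nat.mul_le_mul_left m (not_lt.1 hj))⟩

/-- The parameters `(i, c)` of the paths `rectPath m n i c` with exactly one upper cover. -/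
def rectIndices (m n : ℕ) : Set (ℕ × ℕ) :=
  {p | (0 < p.1 ∧ p.1 < n) ∧ 0 < p.2 ∧ p.2 ≤ m * p.1}

section RectPath

variable {c : ℕ}

theorem val_rectPath (hc : c ≤ m * i) (j : Fin n) :
    (rectPath m n i c).1 j = if (j : ℕ) < i then 0 else c := by
  simp only [rectPath, min_eq_left hc]

theorem height_rectPath (hc : c ≤ m * i) (hj : j < n) :
    (rectPath m n i c).height j = if j < i then m * j else m * j - c := by
  rw [height, dif_pos hj, val_rectPath hc]
  split_ifs <;> simp

theorem rectPath_zero : rectPath m n i 0 = ⊤ :=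
  Subtype.ext (funext fun j => by simp [val_rectPath (Nat.zero_le _), Top.top])

theorem isAscent_rectPath_iff (hi : 0 < i ∧ i < n) (hc₀ : 0 < c) (hc : c ≤ m * i) :
    (rectPath m n i c).IsAscent j ↔ j = i := by
  constructor
  · intro h
    have hlt := (isAscent_iff_val (i := ⟨j, h.2.1⟩) h.1).1 h ⟨j - 1, by have := h.2.1; omega⟩
      (Nat.sub_add_cancel h.1)
    simp only [val_rectPath hc] at hlt
    split_ifs at hlt <;> omega
  · rintro rfl
    refine (isAscent_iff_val (i := ⟨j, hi.2⟩) hi.1).2 fun k (hk : (k : ℕ) + 1 = j) => ?_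
    rw [val_rectPath hc, val_rectPath hc, if_pos (by omega), if_neg (lt_irrefl j)]
    exact hc₀

theorem exists_eq_rectPath (h : ∃! i, u.IsAscent i) :
    ∃ p ∈ rectIndices m n, rectPath m n p.1 p.2 = u := by
  obtain ⟨i, hi, unique⟩ := h
  let i' : Fin n := ⟨i, hi.2.1⟩
  have hle : u.1 i' ≤ m * i := u.2.2 i'
  refine ⟨(i, u.1 i'), ⟨⟨hi.1, hi.2.1⟩, hi.val_pos (j := i') le_rfl, hle⟩,
    Subtype.ext (funext fun j => ?_)⟩
  rw [val_rectPath hle]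
  split_ifs with hj
  · let o : Fin n := ⟨0, by omega⟩
    have const : u.1 o = u.1 j := val_eq_of_forall_not_isAscent (Nat.zero_le _)
      fun l _ (hlj : (l : ℕ) ≤ j) hl => (hlj.trans_lt hj).ne (unique l hl)
    exact const ▸ (Nat.le_zero.1 (u.2.2 o)).symm
  · exact val_eq_of_forall_not_isAscent (i := i') (not_lt.1 hj) fun l (hil : i < l) _ hl =>
      hil.ne' (unique l hl)

theorem exists_isLeast_Ioi_iff_mem_image : (∃ w, IsLeast (Set.Ioi u) w) ↔
    u ∈ (fun p => rectPath m n p.1 p.2) '' rectIndices m n := by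
  rw [exists_isLeast_Ioi_iff]
  refine ⟨exists_eq_rectPath, ?_⟩
  rintro ⟨⟨i, c⟩, ⟨hi, hc₀, hc⟩, rfl⟩
  exact ⟨i, (isAscent_rectPath_iff hi hc₀ hc).2 rfl, fun j => (isAscent_rectPath_iff hi hc₀ hc).1⟩

theorem isRotation_rectPath (hi : 0 < i ∧ i < n) (hc : c < m * i) :
    IsRotation (rectPath m n i (c + 1)) (rectPath m n i c) i (n - 1) := by
  have le_mul {j : ℕ} (hj : ¬j < i) : c < m * j :=
    hc.trans_le (Nat.mul_le_mul_left m (not_lt.1 hj))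
  have m_pos : 0 < m := Nat.pos_of_mul_pos_right ((Nat.zero_le c).trans_lt hc)
  refine ⟨(isAscent_rectPath_iff hi (Nat.succ_pos c) hc).2 rfl, by omega, by omega,
    fun j hij hj => ?_, ?_, fun j => ?_⟩
  · have := Nat.mul_lt_mul_of_pos_left hij m_pos
    rw [height_rectPath hc hi.2, height_rectPath hc (by omega), if_neg (lt_irrefl i),
      if_neg (by omega)]
    omega
  · rw [height_of_le _ (by omega)]
    exact Nat.zero_le _
  · rcases lt_or_ge j n with hj | hj
    · rw [height_rectPath hc hj, height_rectPath hc.le hj]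
      by_cases hji : j < i
      · simp [hji, hji.not_ge]
      · have := le_mul hji
        simp only [hji, if_false, if_pos (show i ≤ j ∧ j ≤ n - 1 by omega)]
        omega
    · rw [height_of_le _ hj, height_of_le _ hj, if_neg (by omega)]

theorem isLeast_Ioi_rectPath (hi : 0 < i ∧ i < n) (hc : c < m * i) :
    IsLeast (Set.Ioi (rectPath m n i (c + 1))) (rectPath m n i c) := by
  obtain ⟨w, hw⟩ := exists_isLeast_Ioi_iff_mem_image.2 ⟨(i, c + 1), ⟨hi, Nat.succ_pos c, hc⟩, rfl⟩
  have hcov := covBy_iff.2 ⟨i, n - 1, isRotation_rectPath hi hc⟩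
  obtain rfl : w = rectPath m n i c :=
    (hw.2 hcov.lt).eq_or_lt.resolve_right (hcov.2 hw.1)
  exact hw

theorem antitone_rectPath (hi : 0 < i ∧ i < n) : Antitone (rectPath m n i) := by
  refine antitone_nat_of_succ_le fun c => ?_
  rcases lt_or_ge c (m * i) with hc | hc
  · exact (isRotation_rectPath hi hc).lt_right.le
  · refine le_of_eq (Subtype.ext (funext fun j => ?_))
    simp only [rectPath, min_eq_right hc, min_eq_right (hc.trans (Nat.le_succ c))]

theorem rectPath_le_iff {i' c' : ℕ} (hi : 0 < i ∧ i < n) (hi' : i' < n) (hc : c ≤ m * i)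
    (hc' : c' ≤ m * i') :
    rectPath m n i c ≤ rectPath m n i' c' ↔ c' = 0 ∨ i = i' ∧ c' ≤ c := by
  constructor
  · intro hle
    refine or_iff_not_imp_left.2 fun hc₀ => ?_
    have m_pos : 0 < m := Nat.pos_of_mul_pos_right (by omega : 0 < m * i')
    have hi'_le := height_mono hle i'
    rw [height_rectPath hc hi', height_rectPath hc' hi', if_neg (lt_irrefl i')] at hi'_le
    have hii' : i ≤ i' := by
      by_contra! h
      rw [if_pos h] at hi'_le
      omega
    have := Nat.mul_le_mul_left m hii'
    rw [if_neg hii'.not_gt] at hi'_le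
    refine ⟨hii'.antisymm (not_lt.1 fun hlt => ?_), by omega⟩
    have hrise := height_add_le_of_le hle hii' fun l hil hli' => by
      have := Nat.mul_lt_mul_of_pos_left hil m_pos
      rw [height_rectPath hc hi.2, height_rectPath hc (by omega), if_neg (lt_irrefl i),
        if_neg (by omega)]
      omega
    rw [height_rectPath hc hi.2, height_rectPath hc hi', height_rectPath hc' hi.2,
      height_rectPath hc' hi', if_neg (lt_irrefl i), if_neg (lt_irrefl i'), if_neg (by omega),
      if_pos hlt] at hrise
    omega
  · rintro (rfl | ⟨rfl, hcc'⟩)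
    · exact rectPath_zero ▸ le_top
    · exact antitone_rectPath hi hcc'

end RectPath

theorem isDrop_of_height_succ_lt (h : u.height (j + 1) < u.height j) : u.IsDrop j :=
  ⟨(Nat.zero_le _).trans_lt h, j, le_rfl, fun _ hjl hlj => absurd hlj hjl.not_ge, h⟩

theorem exists_isDrop_ge (hj : 0 < u.height j) :
    ∃ d, j ≤ d ∧ u.IsDrop d ∧ u.height d = u.height j := by
  induction hd : n - j using Nat.strong_induction_on generalizing j with
  | h d ih =>
    have hjn := lt_of_height_pos hj
    obtain ⟨k, hjk, hkn, lt_height, height_end⟩ := u.exists_primitive_end hjn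
    rcases height_end.lt_or_eq with hlt | heq
    · exact ⟨j, le_rfl, ⟨hj, k, hjk, lt_height, hlt⟩, rfl⟩
    · obtain ⟨d, hkd, hdrop, hd⟩ := ih (n - (k + 1)) (by omega) (heq ▸ hj) rfl
      exact ⟨d, by omega, hdrop, hd.trans heq⟩

/-- The path with height `s` at the positions `i < j ≤ k` and `0` elsewhere, where `s` is truncated
to its largest possible value `m`. -/
def blockPath (m n i k s : ℕ) : DyckM m n :=
  ofHeight n (fun j => if i < j ∧ j ≤ k ∧ j < n then min s m else 0) fun j => by
    split_ifs <;> omega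

/-- The parameters `(i, k, s)` of the paths `blockPath m n i k s` with exactly one lower cover. -/
def blockIndices (m n : ℕ) : Set (ℕ × ℕ × ℕ) :=
  {p | (p.1 < p.2.1 ∧ p.2.1 < n) ∧ 0 < p.2.2 ∧ p.2.2 ≤ m}

section BlockPath

variable {s : ℕ}

theorem height_blockPath (hk : k < n) (hs : s ≤ m) (j : ℕ) :
    (blockPath m n i k s).height j = if i < j ∧ j ≤ k then s else 0 := by
  rw [blockPath, height_ofHeight (by simp) fun j hj => if_neg (by omega)]
  split_ifs <;> omega

theorem isDrop_blockPath_iff (hik : i < k) (hk : k < n) (hs₀ : 0 < s) (hs : s ≤ m) :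
    (blockPath m n i k s).IsDrop j ↔ j = k := by
  constructor
  · rintro ⟨pos, l, hjl, lt_height, height_end⟩
    have := lt_height (j + 1) (Nat.lt_succ_self j)
    rcases hjl.eq_or_lt with rfl | hjl <;> simp only [height_blockPath hk hs] at * <;>
      split_ifs at * <;> omega
  · rintro rfl
    refine isDrop_of_height_succ_lt ?_
    rwa [height_blockPath hk hs, height_blockPath hk hs, if_neg (by omega), if_pos ⟨hik, le_rfl⟩]

theorem exists_eq_blockPath (h : ∃! j, u.IsDrop j) :
    ∃ p ∈ blockIndices m n, blockPath m n p.1 p.2.1 p.2.2 = u := by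
  obtain ⟨k, hk, unique⟩ := h
  have of_pos (j : ℕ) (hj : 0 < u.height j) : j ≤ k ∧ u.height j = u.height k := by
    obtain ⟨d, hjd, hdrop, hd⟩ := exists_isDrop_ge hj
    obtain rfl := unique d hdrop
    exact ⟨hjd, hd.symm⟩
  have succ_pos (j : ℕ) (hjk : j < k) (hj : 0 < u.height j) : 0 < u.height (j + 1) :=
    Nat.pos_of_ne_zero fun h => hjk.ne (unique j (isDrop_of_height_succ_lt (h.trans_lt hj)))
  let i := Nat.findGreatest (fun j => u.height j = 0) k
  have hi : u.height i = 0 :=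
    Nat.findGreatest_spec (P := fun j => u.height j = 0) k.zero_le u.height_zero
  have hik : i < k := (Nat.findGreatest_le k).lt_of_ne fun h => hk.1.ne' (h ▸ hi)
  have pos_after (j : ℕ) (hij : i < j) (hjk : j ≤ k) : 0 < u.height j :=
    Nat.pos_of_ne_zero (Nat.findGreatest_is_greatest (P := fun j => u.height j = 0) hij hjk)
  have zero_before (j : ℕ) (hji : j ≤ i) : u.height j = 0 := by
    induction hji using Nat.decreasingInduction with
    | self => exact hi
    | of_succ j hji ih =>
      by_contra hj
      exact (succ_pos j (by omega) (Nat.pos_of_ne_zero hj)).ne' ih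
  have hs : u.height k ≤ m := by
    have := u.height_succ_le i
    have := (of_pos (i + 1) (pos_after (i + 1) (Nat.lt_succ_self i) hik)).2
    omega
  have hkn := lt_of_height_pos hk.1
  refine ⟨(i, k, u.height k), ⟨⟨hik, hkn⟩, hk.1, hs⟩, ext_height fun j _ => ?_⟩
  rw [height_blockPath hkn hs]
  split_ifs with hj
  · exact (of_pos j (pos_after j hj.1 hj.2)).2.symm
  · by_contra! h
    have := (of_pos j (Nat.pos_of_ne_zero h.symm)).1
    exact h.symm (zero_before j (by omega))

theorem exists_isGreatest_Iio_iff_mem_image : (∃ w, IsGreatest (Set.Iio u) w) ↔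
    u ∈ (fun p => blockPath m n p.1 p.2.1 p.2.2) '' blockIndices m n := by
  rw [exists_isGreatest_Iio_iff]
  refine ⟨exists_eq_blockPath, ?_⟩
  rintro ⟨⟨i, k, s⟩, ⟨⟨hik, hk⟩, hs₀, hs⟩, rfl⟩
  exact ⟨k, (isDrop_blockPath_iff hik hk hs₀ hs).2 rfl,
    fun j => (isDrop_blockPath_iff hik hk hs₀ hs).1⟩

theorem blockPath_le (hk : k < n) (hs₀ : 0 < s) (hs : s ≤ m) :
    blockPath m n i k s ≤ v ↔ ∀ j, i < j → j ≤ k → v.height i + s ≤ v.height j := by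
  refine ⟨fun hle j hij hjk => ?_, fun h => le_iff.2 fun t _ a b hab l hal hlb => ?_⟩
  · have clears : (blockPath m n i k s).Clears (s - 1) i j := fun l hil hlj => by
      rw [height_blockPath hk hs, height_blockPath hk hs, if_neg (by omega), if_pos (by omega)]
      omega
    have := clears.mono hle j hij le_rfl
    omega
  · have hl := hab l hal hlb
    have hi := hab i
    simp only [height_blockPath hk hs] at hl hi
    obtain rfl : a = i := by split_ifs at hl hi <;> omega
    have := h l hal
    split_ifs at hl <;> omega

theorem blockPath_le_iff {i' k' s' : ℕ} (hik : i < k) (hk : k < n) (hs₀ : 0 < s) (hs : s ≤ m)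
    (hk' : k' < n) (hs' : s' ≤ m) :
    blockPath m n i k s ≤ blockPath m n i' k' s' ↔ i = i' ∧ k ≤ k' ∧ s ≤ s' := by
  rw [blockPath_le hk hs₀ hs]
  simp only [height_blockPath hk' hs']
  refine ⟨fun h => ?_, ?_⟩
  · have first := h (i + 1) (Nat.lt_succ_self i) hik
    have last := h k hik le_rfl
    split_ifs at first last <;> omega
  · rintro ⟨rfl, hkk', hss'⟩ j hij hjk
    rw [if_neg (by omega), if_pos (by omega)]
    omega

end BlockPath

end DyckM

/-- The tuples of the cover poset of `P`, indexed by a chain `ι`: the monotone tuples with values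
in `{⊥, p, q}` for some cover relation `p ⋖ q`. For `ι = Fin m`, monotonicity forces the shape
`(⊥^l₀, p^l₁, q^l₂)`. -/
def coverTuples (ι P : Type*) [Preorder ι] [PartialOrder P] [OrderBot P] : Set (ι → P) :=
  {f | Monotone f ∧ ∃ p q, p ⋖ q ∧ ∀ i, f i = ⊥ ∨ f i = p ∨ f i = q}

section CoverTuples

variable {ι P : Type*}

theorem exists_last_eq [Preorder ι] [Finite ι] {f : ι → P} {a : P} (h : ∃ i, f i = a) :
    ∃ i, f i = a ∧ ∀ j, i < j → f j ≠ a := by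
  obtain ⟨i, hi⟩ := (Set.toFinite {i | f i = a}).exists_maximal h
  exact ⟨i, hi.prop, fun j hij => hi.not_prop_of_gt hij⟩

theorem exists_first_eq [Preorder ι] [Finite ι] {f : ι → P} {a : P} (h : ∃ i, f i = a) :
    ∃ i, f i = a ∧ ∀ j, j < i → f j ≠ a :=
  exists_last_eq (ι := ιᵒᵈ) h

section Update

variable [DecidableEq ι] [PartialOrder P] {C : Set (ι → P)} {f g : ι → P} {i j : ι} {x y : P}

theorem lt_and_eq_of_isLeast_of_update_mem (hg : IsLeast (C ∩ Set.Ioi f) g) (hx : f i < x)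
    (hC : Function.update f i x ∈ C) : f i < g i ∧ g i ≤ x ∧ ∀ k ≠ i, g k = f k := by
  have hfg : f < g := hg.1.2
  have hgx : g ≤ Function.update f i x := hg.2 ⟨hC, lt_update_self_iff.2 hx⟩
  have off (k : ι) (hk : k ≠ i) : g k = f k :=
    (Function.update_of_ne hk x f ▸ hgx k).antisymm (hfg.le k)
  refine ⟨(hfg.le i).lt_of_ne fun h => hfg.ne (funext fun k => ?_), ?_, off⟩
  · by_cases hk : k = i
    · exact hk ▸ h
    · exact (off k hk).symm
  · simpa using hgx i

theorem lt_and_eq_of_isGreatest_of_update_mem (hg : IsGreatest (C ∩ Set.Iio f) g) (hx : x < f i)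
    (hC : Function.update f i x ∈ C) : g i < f i ∧ x ≤ g i ∧ ∀ k ≠ i, g k = f k := by
  have hgf : g < f := hg.1.2
  have hxg : Function.update f i x ≤ g := hg.2 ⟨hC, update_lt_self_iff.2 hx⟩
  have off (k : ι) (hk : k ≠ i) : g k = f k :=
    (hgf.le k).antisymm (Function.update_of_ne hk x f ▸ hxg k)
  refine ⟨(hgf.le i).lt_of_ne fun h => hgf.ne (funext fun k => ?_), ?_, off⟩
  · by_cases hk : k = i
    · exact hk ▸ h
    · exact off k hk
  · simpa using hxg i

theorem eq_of_isLeast_of_update_mem (hg : IsLeast (C ∩ Set.Ioi f) g) (hx : f i < x)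
    (hxC : Function.update f i x ∈ C) (hy : f j < y) (hyC : Function.update f j y ∈ C) : i = j := by
  by_contra hij
  exact (lt_and_eq_of_isLeast_of_update_mem hg hx hxC).1.ne'
    ((lt_and_eq_of_isLeast_of_update_mem hg hy hyC).2.2 i hij)

theorem eq_of_isGreatest_of_update_mem (hg : IsGreatest (C ∩ Set.Iio f) g) (hx : x < f i)
    (hxC : Function.update f i x ∈ C) (hy : y < f j) (hyC : Function.update f j y ∈ C) : i = j := by
  by_contra hij
  exact (lt_and_eq_of_isGreatest_of_update_mem hg hx hxC).1.ne
    ((lt_and_eq_of_isGreatest_of_update_mem hg hy hyC).2.2 i hij)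

theorem monotone_update [PartialOrder ι] (hf : Monotone f) (below : ∀ j < i, f j ≤ x)
    (above : ∀ j, i < j → x ≤ f j) : Monotone (Function.update f i x) := by
  intro a b hab
  by_cases ha : a = i <;> by_cases hb : b = i
  · rw [ha, hb]
  · simpa [ha, hb] using above b (ha ▸ hab.lt_of_ne (ha ▸ Ne.symm hb))
  · simpa [ha, hb] using below a (hb ▸ hab.lt_of_ne (hb ▸ ha))
  · simpa [ha, hb] using hf hab

theorem update_mem_coverTuples [PartialOrder ι] [OrderBot P] {p q : P} (hf : Monotone f)
    (hpq : p ⋖ q) (hval : ∀ i, f i = ⊥ ∨ f i = p ∨ f i = q) (hx : x = ⊥ ∨ x = p ∨ x = q)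
    (below : ∀ j < i, f j ≤ x) (above : ∀ j, i < j → x ≤ f j) :
    Function.update f i x ∈ coverTuples ι P := by
  refine ⟨monotone_update hf below above, p, q, hpq, fun j => ?_⟩
  rcases eq_or_ne j i with rfl | hj
  · simpa using hx
  · simpa [hj] using hval j

end Update

variable [LinearOrder ι] [PartialOrder P] {f g : ι → P} {p q : P}

theorem not_bot_and_lower_of_isLeast [OrderBot P] [Finite ι]
    (hg : IsLeast (coverTuples ι P ∩ Set.Ioi f) g) (hf : Monotone f) (hpq : p ⋖ q)
    (hval : ∀ i, f i = ⊥ ∨ f i = p ∨ f i = q) (hp : p ≠ ⊥)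
    (hbot : ∃ i, f i = ⊥) : ¬∃ i, f i = p := by
  intro hattain
  obtain ⟨i, hi, hi_last⟩ := exists_last_eq hbot
  obtain ⟨j, hj, hj_last⟩ := exists_last_eq hattain
  have raise_bot : Function.update f i p ∈ coverTuples ι P := by
    refine update_mem_coverTuples hf hpq hval (by simp)
      (fun k hk => (hf hk.le).trans (by simp [hi])) fun k hk => ?_
    rcases (hval k).resolve_left (hi_last k hk) with h | h
    exacts [h.ge, h ▸ hpq.le]
  have raise_lower : Function.update f j q ∈ coverTuples ι P := by
    refine update_mem_coverTuples hf hpq hval (by simp) (fun k hk => (hf hk.le).trans (hj ▸ hpq.le))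
      fun k hk => ?_
    have hk_ne_bot : f k ≠ ⊥ := fun h => hp (le_bot_iff.1 (hj ▸ h ▸ hf hk.le))
    exact (((hval k).resolve_left hk_ne_bot).resolve_left (hj_last k hk)).ge
  have hij := eq_of_isLeast_of_update_mem hg (hi ▸ hp.bot_lt) raise_bot (hj ▸ hpq.lt) raise_lower
  exact hp (hj ▸ hij ▸ hi)

theorem update_bot_mem_coverTuples [OrderBot P] (hf : Monotone f) (hpq : p ⋖ q)
    (hval : ∀ i, f i = ⊥ ∨ f i = q) {i : ι} (hi : f i = ⊥) (hi_last : ∀ j, i < j → f j ≠ ⊥) :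
    Function.update f i p ∈ coverTuples ι P :=
  update_mem_coverTuples hf hpq (fun k => (hval k).imp_right .inr) (by simp)
    (fun k hk => (hf hk.le).trans (by simp [hi]))
    fun k hk => ((hval k).resolve_left (hi_last k hk)).symm ▸ hpq.le

theorem eq_top_of_isLeast_of_bot_and_upper [BoundedOrder P] [Finite ι] [IsStronglyAtomic P]
    (hg : IsLeast (coverTuples ι P ∩ Set.Ioi f) g) (hf : Monotone f) (hpq : p ⋖ q) (hp : p ≠ ⊥)
    (hval : ∀ i, f i = ⊥ ∨ f i = q) (hbot : ∃ i, f i = ⊥) (hupper : ∃ i, f i = q) : q = ⊤ := by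
  obtain ⟨i, hi, hi_last⟩ := exists_last_eq hbot
  obtain ⟨j, hj, hj_last⟩ := exists_last_eq hupper
  by_contra hq_top
  obtain ⟨s, hqs, -⟩ := exists_covBy_le_of_lt (lt_top_iff_ne_top.2 hq_top)
  have raise_upper : Function.update f j s ∈ coverTuples ι P :=
    update_mem_coverTuples hf hqs (fun k => (hval k).imp_right .inl)
      (by simp) (fun k hk => (hf hk.le).trans (hj ▸ hqs.le)) fun k hk =>
        absurd (le_bot_iff.1 (hj ▸ ((hval k).resolve_right (hj_last k hk)) ▸ hf hk.le))
          hpq.lt.ne_bot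
  have hji := eq_of_isLeast_of_update_mem hg (hj ▸ hqs.lt) raise_upper (hi ▸ hp.bot_lt)
    (update_bot_mem_coverTuples hf hpq hval hi hi_last)
  exact hpq.lt.ne_bot (hj ▸ hji ▸ hi)

theorem not_bot_and_upper_of_isLeast [BoundedOrder P] [Finite ι] [Finite P]
    (htop : ∀ c, IsGreatest (Set.Iio (⊤ : P)) c → c = ⊥)
    (hg : IsLeast (coverTuples ι P ∩ Set.Ioi f) g) (hf : Monotone f) (hpq : p ⋖ q) (hp : p ≠ ⊥)
    (hval : ∀ i, f i = ⊥ ∨ f i = q) (hbot : ∃ i, f i = ⊥) : ¬∃ i, f i = q := by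
  intro hupper
  obtain rfl := eq_top_of_isLeast_of_bot_and_upper hg hf hpq hp hval hbot hupper
  obtain ⟨i, hi, hi_last⟩ := exists_last_eq hbot
  obtain ⟨j, hj⟩ := hupper
  have hij : j ≠ i := fun h => hpq.lt.ne_bot (hj ▸ h ▸ hi)
  have g_le (c : P) (hc : c ⋖ ⊤) (hc₀ : c ≠ ⊥) : ⊥ < g i ∧ g i ≤ c ∧ g j = ⊤ := by
    obtain ⟨h₁, h₂, h₃⟩ := lt_and_eq_of_isLeast_of_update_mem hg (hi ▸ hc₀.bot_lt)
      (update_bot_mem_coverTuples hf hc hval hi hi_last)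
    exact ⟨hi ▸ h₁, h₂, (h₃ j hij).trans hj⟩
  obtain ⟨gi_pos, gi_le, gj⟩ := g_le p hpq hp
  have gi_covBy : g i ⋖ ⊤ := by
    obtain ⟨-, p', q', hpq', hval'⟩ := hg.1.1
    obtain rfl : ⊤ = q' := gj ▸ ((hval' j).resolve_left (gj ▸ hpq.lt.ne_bot)).resolve_left
      (gj ▸ fun h => hpq'.lt.ne_top h.symm)
    exact ((hval' i).resolve_left gi_pos.ne').resolve_right (gi_le.trans_lt hpq.lt).ne ▸ hpq'
  refine gi_pos.ne' (htop _ ⟨gi_covBy.lt, fun x hx => ?_⟩)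
  obtain ⟨c, hxc, hc⟩ := exists_le_covBy_of_lt hx
  rcases eq_or_ne c ⊥ with rfl | hc₀
  · exact hxc.trans bot_le
  · exact hxc.trans_eq ((gi_covBy.eq_or_eq (g_le c hc hc₀).2.1 hc.le).resolve_right hc.lt.ne)

theorem exists_covBy_of_isLeast [BoundedOrder P] [Finite ι] [Finite P]
    (htop : ∀ c, IsGreatest (Set.Iio (⊤ : P)) c → c = ⊥)
    (hg : IsLeast (coverTuples ι P ∩ Set.Ioi f) g) (hfC : f ∈ coverTuples ι P) :
    ∃ p q, p ⋖ q ∧ (∀ i, f i = p ∨ f i = q) ∧ ∃ i, f i = p := by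
  have of_const (a : P) (ha : ∀ i, f i = a) :
      ∃ p q, p ⋖ q ∧ (∀ i, f i = p ∨ f i = q) ∧ ∃ i, f i = p := by
    obtain ⟨-, i, hi⟩ := Pi.lt_def.1 (show f < g from hg.1.2)
    obtain ⟨b, hab, -⟩ := exists_covBy_le_of_lt hi
    exact ⟨f i, b, hab, fun j => .inl ((ha j).trans (ha i).symm), i, rfl⟩
  obtain ⟨hf, p, q, hpq, hval⟩ := hfC
  by_cases hattain : ∃ i, f i = p
  · rcases eq_or_ne p ⊥ with rfl | hp
    · exact ⟨⊥, q, hpq, fun i => by simpa using hval i, hattain⟩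
    · have no_bot : ¬∃ i, f i = ⊥ := fun hbot =>
        not_bot_and_lower_of_isLeast hg hf hpq hval hp hbot hattain
      exact ⟨p, q, hpq, fun i => (hval i).resolve_left fun h => no_bot ⟨i, h⟩, hattain⟩
  · have hval' (i : ι) : f i = ⊥ ∨ f i = q :=
      (hval i).imp_right fun h => h.resolve_left fun h => hattain ⟨i, h⟩
    by_cases hbot : ∃ i, f i = ⊥
    · have hp : p ≠ ⊥ := fun hp => hattain (hp ▸ hbot)
      have no_upper := not_bot_and_upper_of_isLeast htop hg hf hpq hp hval' hbot
      exact of_const ⊥ fun i => (hval' i).resolve_right fun h => no_upper ⟨i, h⟩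
    · exact of_const q fun i => (hval' i).resolve_left fun h => hbot ⟨i, h⟩

theorem exists_lt_mem_coverTuples_of_lt_covBy [OrderBot P] {r s : P} (hf : Monotone f) (hpq : p ⋖ q)
    (hval : ∀ i, f i = p ∨ f i = q) {i : ι} (hi : f i = p) (hpr : p < r) (hrs : r ⋖ s)
    (hqs : q ≤ s) : ∃ h ∈ coverTuples ι P, f < h ∧ h i = r := by
  classical
  refine ⟨fun k => if f k = p then r else s, ⟨fun a b hab => ?_, r, s, hrs, fun k => ?_⟩,
    Pi.lt_def.2 ⟨fun k => ?_, i, ?_⟩, if_pos hi⟩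
  · have : f b = p → f a = p := fun hb =>
      (hval a).resolve_right fun ha => (ha ▸ hb ▸ hf hab).not_gt hpq.lt
    dsimp only
    split_ifs
    exacts [le_rfl, hrs.le, absurd (this ‹_›) ‹_›, le_rfl]
  · dsimp only
    split_ifs <;> simp
  · dsimp only
    split_ifs with hk
    exacts [hk ▸ hpr.le, (hval k).resolve_left hk ▸ hqs]
  · simpa [hi] using hpr

theorem isLeast_Ioi_of_isLeast [BoundedOrder P] [Finite ι] [Finite P]
    (hg : IsLeast (coverTuples ι P ∩ Set.Ioi f) g) (hf : Monotone f) (hpq : p ⋖ q)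
    (hval : ∀ i, f i = p ∨ f i = q) (hattain : ∃ i, f i = p) :
    IsLeast (Set.Ioi p) q := by
  refine ⟨hpq.lt, fun x hpx => ?_⟩
  by_contra hqx
  obtain ⟨r, hxr, hr⟩ := (Set.toFinite {r | ¬q ≤ r}).exists_le_maximal hqx
  have hqr : ¬q ≤ r := hr.prop
  obtain ⟨s, hrs, -⟩ := exists_covBy_le_of_lt
    (lt_top_iff_ne_top.2 fun h => hqr (le_top.trans_eq h.symm))
  have hqs : q ≤ s := not_not.1 (hr.not_prop_of_gt hrs.lt)
  obtain ⟨i, hi, hi_last⟩ := exists_last_eq hattain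
  have raise : Function.update f i q ∈ coverTuples ι P :=
    update_mem_coverTuples hf hpq (fun k => .inr (hval k)) (by simp)
      (fun k hk => (hf hk.le).trans (hi ▸ hpq.le))
      fun k hk => ((hval k).resolve_left (hi_last k hk)).ge
  obtain ⟨gi_gt, gi_le, -⟩ := lt_and_eq_of_isLeast_of_update_mem hg (hi ▸ hpq.lt) raise
  obtain ⟨h, hC, hfh, hir⟩ := exists_lt_mem_coverTuples_of_lt_covBy hf hpq hval hi
    (lt_of_lt_of_le hpx hxr) hrs hqs
  have hgr : g i ≤ r := hir ▸ hg.2 ⟨hC, hfh⟩ i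
  exact hqr ((hpq.eq_or_eq (hi ▸ gi_gt.le) gi_le).resolve_left (hi ▸ gi_gt.ne') ▸ hgr)

theorem isLeast_update_of_isLeast_Ioi [BoundedOrder P]
    (hbot : ∀ q, IsLeast (Set.Ioi (⊥ : P)) q → q = ⊤) (hf : Monotone f)
    (hpq : IsLeast (Set.Ioi p) q) (hval : ∀ i, f i = p ∨ f i = q) {i : ι}
    (hi : f i = p) (hi_last : ∀ j, i < j → f j ≠ p) :
    IsLeast (coverTuples ι P ∩ Set.Ioi f) (Function.update f i q) := by
  have hcov : p ⋖ q := covBy_of_isLeast_Ioi hpq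
  have mem : Function.update f i q ∈ coverTuples ι P :=
    update_mem_coverTuples hf hcov (fun k => .inr (hval k)) (by simp)
      (fun k hk => (hf hk.le).trans (hi ▸ hcov.le))
      fun k hk => ((hval k).resolve_left (hi_last k hk)).ge
  refine ⟨⟨mem, lt_update_self_iff.2 (hi ▸ hcov.lt)⟩, fun h ⟨⟨h_mono, p', q', hpq', h_val⟩, hfh⟩ =>
    update_le_iff.2 ⟨?_, fun k _ => (show f < h from hfh).le k⟩⟩
  obtain ⟨hfh_le, j, hj⟩ := Pi.lt_def.1 (show f < h from hfh)
  by_contra hqi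
  have hpi_le : p ≤ h i := hi ▸ hfh_le i
  have hhi : h i = p := (hpi_le.eq_or_lt.resolve_right fun hlt => hqi (hpq.2 hlt)).symm
  have hfj : f j = q := by
    refine (hval j).resolve_left fun hfj => ?_
    have hji : j ≤ i := not_lt.1 fun hij => hi_last j hij hfj
    exact (hfj ▸ hj).not_ge (hhi ▸ h_mono hji)
  have hqj : q < h j := hfj ▸ hj
  have hp_bot : p = ⊥ := by
    by_contra hp
    have hpi : p = p' ∨ p = q' := (hhi ▸ h_val i).resolve_left hp
    have hhj : h j = p' ∨ h j = q' := (h_val j).resolve_left (bot_le.trans_lt hqj).ne'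
    have hpj : p < h j := hcov.lt.trans hqj
    rcases hpi with rfl | rfl
    · exact hpq'.2 hcov.lt (hhj.resolve_left hpj.ne' ▸ hqj)
    · exact hpj.not_ge (hhj.elim (fun h => h ▸ hpq'.le) fun h => h.le)
  exact (hbot q (hp_bot ▸ hpq) ▸ hqj).not_ge le_top

theorem mem_coverTuples_and_exists_isLeast_iff [BoundedOrder P] [Finite ι] [Finite P]
    (hbot : ∀ q, IsLeast (Set.Ioi (⊥ : P)) q → q = ⊤)
    (htop : ∀ c, IsGreatest (Set.Iio (⊤ : P)) c → c = ⊥) :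
    (f ∈ coverTuples ι P ∧ ∃ g, IsLeast (coverTuples ι P ∩ Set.Ioi f) g) ↔
      Monotone f ∧ ∃ p q, IsLeast (Set.Ioi p) q ∧ (∀ i, f i = p ∨ f i = q) ∧ ∃ i, f i = p := by
  constructor
  · rintro ⟨hfC, g, hg⟩
    obtain ⟨p, q, hpq, hval, hattain⟩ := exists_covBy_of_isLeast htop hg hfC
    exact ⟨hfC.1, p, q, isLeast_Ioi_of_isLeast hg hfC.1 hpq hval hattain, hval, hattain⟩
  · rintro ⟨hf, p, q, hpq, hval, hattain⟩
    obtain ⟨i, hi, hi_last⟩ := exists_last_eq hattain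
    exact ⟨⟨hf, p, q, covBy_of_isLeast_Ioi hpq, fun k => .inr (hval k)⟩,
      _, isLeast_update_of_isLeast_Ioi hbot hf hpq hval hi hi_last⟩

theorem not_lower_and_upper_of_isGreatest [OrderBot P] [Finite ι]
    (hg : IsGreatest (coverTuples ι P ∩ Set.Iio f) g) (hf : Monotone f) (hpq : p ⋖ q)
    (hval : ∀ i, f i = ⊥ ∨ f i = p ∨ f i = q) (hp : p ≠ ⊥) (hlower : ∃ i, f i = p) :
    ¬∃ i, f i = q := by
  intro hupper
  obtain ⟨i, hi, hi_first⟩ := exists_first_eq hlower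
  obtain ⟨j, hj, hj_first⟩ := exists_first_eq hupper
  have below_i (k : ι) (hk : k < i) : f k = ⊥ :=
    (hval k).resolve_right fun h => h.elim (hi_first k hk) fun h =>
      (hi ▸ h ▸ hf hk.le).not_gt hpq.lt
  have lower_i : Function.update f i ⊥ ∈ coverTuples ι P :=
    update_mem_coverTuples hf hpq hval (by simp) (fun k hk => (below_i k hk).le)
      fun k _ => bot_le
  have lower_j : Function.update f j p ∈ coverTuples ι P := by
    refine update_mem_coverTuples hf hpq hval (by simp) (fun k hk => ?_)
      fun k hk => hpq.le.trans (hj ▸ hf hk.le)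
    rcases hval k with h | h | h
    exacts [h ▸ bot_le, h.le, absurd h (hj_first k hk)]
  have hij := eq_of_isGreatest_of_update_mem hg (hi ▸ hp.bot_lt) lower_i (hj ▸ hpq.lt) lower_j
  exact hpq.ne (hi ▸ hij ▸ hj)

theorem exists_bot_or_eq_of_isGreatest [OrderBot P] [Finite ι]
    (hg : IsGreatest (coverTuples ι P ∩ Set.Iio f) g) (hfC : f ∈ coverTuples ι P) :
    ∃ a, (∀ i, f i = ⊥ ∨ f i = a) ∧ ∃ i, f i = a ∧ a ≠ ⊥ := by
  obtain ⟨hf, p, q, hpq, hval⟩ := hfC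
  obtain ⟨-, i, hi⟩ := Pi.lt_def.1 (show g < f from hg.1.2)
  have hfi : f i ≠ ⊥ := (bot_le.trans_lt hi).ne'
  by_cases hupper : ∃ i, f i = q
  · obtain ⟨j, hj⟩ := hupper
    refine ⟨q, fun k => ?_, j, hj, hpq.lt.ne_bot⟩
    rcases hval k with hk | hk | hk
    · exact .inl hk
    · refine .inl (hk.trans (by_contra fun hp => ?_))
      exact not_lower_and_upper_of_isGreatest hg hf hpq hval hp ⟨k, hk⟩ ⟨j, hj⟩
    · exact .inr hk
  · refine ⟨p, fun k => (hval k).imp_right fun h => h.resolve_right fun hk => hupper ⟨k, hk⟩, i, ?_⟩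
    have := ((hval i).resolve_left hfi).resolve_right fun h => hupper ⟨i, h⟩
    exact ⟨this, this ▸ hfi⟩

theorem exists_isGreatest_Iio_of_isGreatest [OrderBot P] [Finite ι] [IsStronglyCoatomic P]
    (hg : IsGreatest (coverTuples ι P ∩ Set.Iio f) g) (hf : Monotone f) (hp : p ≠ ⊥)
    (hval : ∀ i, f i = ⊥ ∨ f i = p) (hattain : ∃ i, f i = p) :
    ∃ c, IsGreatest (Set.Iio p) c := by
  obtain ⟨i, hi, hi_first⟩ := exists_first_eq hattain
  have g_ge (c : P) (hc : c ⋖ p) : g i < p ∧ c ≤ g i := by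
    have lower : Function.update f i c ∈ coverTuples ι P :=
      update_mem_coverTuples hf hc (fun k => (hval k).imp_right .inr) (by simp)
        (fun k hk => ((hval k).resolve_right (hi_first k hk)).trans_le bot_le)
        fun k hk => hc.le.trans (hi ▸ hf hk.le)
    obtain ⟨h₁, h₂, -⟩ := lt_and_eq_of_isGreatest_of_update_mem hg (hi ▸ hc.lt) lower
    exact ⟨hi ▸ h₁, h₂⟩
  obtain ⟨c, -, hc⟩ := exists_le_covBy_of_lt hp.bot_lt
  refine ⟨g i, (g_ge c hc).1, fun x hx => ?_⟩
  obtain ⟨d, hxd, hd⟩ := exists_le_covBy_of_lt hx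
  exact hxd.trans (g_ge d hd).2

theorem isGreatest_update_of_isGreatest_Iio [OrderBot P] {c : P} (hf : Monotone f)
    (hc : IsGreatest (Set.Iio p) c) (hval : ∀ i, f i = ⊥ ∨ f i = p) {i : ι} (hi : f i = p)
    (hi_first : ∀ j, j < i → f j ≠ p) :
    IsGreatest (coverTuples ι P ∩ Set.Iio f) (Function.update f i c) := by
  have hcov : c ⋖ p := covBy_of_isGreatest_Iio hc
  have mem : Function.update f i c ∈ coverTuples ι P :=
    update_mem_coverTuples hf hcov (fun k => (hval k).imp_right .inr) (by simp)
      (fun k hk => ((hval k).resolve_right (hi_first k hk)).trans_le bot_le)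
      fun k hk => hcov.le.trans (hi ▸ hf hk.le)
  refine ⟨⟨mem, update_lt_self_iff.2 (hi ▸ hcov.lt)⟩, fun h ⟨⟨h_mono, _⟩, hhf⟩ =>
    le_update_iff.2 ⟨?_, fun k _ => (show h < f from hhf).le k⟩⟩
  obtain ⟨-, j, hj⟩ := Pi.lt_def.1 (show h < f from hhf)
  have hfj : f j = p := (hval j).resolve_left (bot_le.trans_lt hj).ne'
  have hij : i ≤ j := not_lt.1 fun hji => hi_first j hji hfj
  exact hc.2 ((h_mono hij).trans_lt (hfj ▸ hj))

theorem mem_coverTuples_and_exists_isGreatest_iff [OrderBot P] [Finite ι] [IsStronglyCoatomic P] :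
    (f ∈ coverTuples ι P ∧ ∃ g, IsGreatest (coverTuples ι P ∩ Set.Iio f) g) ↔
      Monotone f ∧ ∃ p, (∃ c, IsGreatest (Set.Iio p) c) ∧
        (∀ i, f i = ⊥ ∨ f i = p) ∧ ∃ i, f i = p := by
  constructor
  · rintro ⟨hfC, g, hg⟩
    obtain ⟨p, hval, i, hi, hp⟩ := exists_bot_or_eq_of_isGreatest hg hfC
    exact ⟨hfC.1, p, exists_isGreatest_Iio_of_isGreatest hg hfC.1 hp hval ⟨i, hi⟩, hval, i, hi⟩
  · rintro ⟨hf, p, ⟨c, hc⟩, hval, hattain⟩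
    obtain ⟨i, hi, hi_first⟩ := exists_first_eq hattain
    exact ⟨⟨hf, c, p, covBy_of_isGreatest_Iio hc,
      fun k => (hval k).imp_right .inr⟩, _,
      isGreatest_update_of_isGreatest_Iio hf hc hval hi hi_first⟩

end CoverTuples

theorem exists_mem_iff_val_lt_of_isLowerSet {m : ℕ} {s : Set (Fin m)} (hs : IsLowerSet s) :
    ∃ l ≤ m, ∀ i : Fin m, i ∈ s ↔ (i : ℕ) < l := by
  classical
  have ends : ∃ l, ∀ i : Fin m, (i : ℕ) = l → i ∉ s := ⟨m, fun i hi => absurd hi i.2.ne⟩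
  refine ⟨Nat.find ends, Nat.find_min' ends fun i hi => absurd hi i.2.ne,
    fun i => ⟨fun hi => ?_, ?_⟩⟩
  · by_contra! hle
    exact Nat.find_spec ends ⟨Nat.find ends, hle.trans_lt i.2⟩ rfl (hs hle hi)
  · intro hi
    obtain ⟨j, hj, hjs⟩ : ∃ j : Fin m, (j : ℕ) = i ∧ j ∈ s := by simpa using Nat.find_min ends hi
    exact Fin.ext hj ▸ hjs

/-- The tuple `(p^l, q^(m-l))`. -/
def pairTuple {α : Type*} (m l : ℕ) (p q : α) : Fin m → α :=
  fun i => if (i : ℕ) < l then p else q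

section PairTuple

variable {α : Type*} [PartialOrder α] {m l l' : ℕ} {p p' q : α} {f : Fin m → α}

theorem exists_eq_pairTuple_iff (hpq : p < q) :
    (∃ l ≤ m, f = pairTuple m l p q) ↔ Monotone f ∧ ∀ i, f i = p ∨ f i = q := by
  constructor
  · rintro ⟨l, -, rfl⟩
    refine ⟨fun i j (hij : (i : ℕ) ≤ j) => ?_, fun i => ite_eq_or_eq _ _ _⟩
    dsimp only [pairTuple]
    split_ifs
    exacts [le_rfl, hpq.le, by omega, le_rfl]
  · rintro ⟨hf, hval⟩
    have lower : IsLowerSet {i | f i = p} := fun j i hij (hj : f j = p) =>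
      (hval i).resolve_right fun hi => (hi ▸ hj ▸ hf hij).not_gt hpq
    obtain ⟨l, hl, hfl⟩ := exists_mem_iff_val_lt_of_isLowerSet lower
    refine ⟨l, hl, funext fun i => ?_⟩
    dsimp only [pairTuple]
    split_ifs with hi
    exacts [(hfl i).2 hi, (hval i).resolve_left fun h => hi ((hfl i).1 h)]

theorem exists_eq_pairTuple_of_pos_iff (hpq : p < q) :
    (∃ l, (0 < l ∧ l ≤ m) ∧ f = pairTuple m l p q) ↔
      Monotone f ∧ (∀ i, f i = p ∨ f i = q) ∧ ∃ i, f i = p := by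
  rw [← and_assoc, ← exists_eq_pairTuple_iff hpq]
  constructor
  · rintro ⟨l, ⟨hl₀, hl⟩, rfl⟩
    exact ⟨⟨l, hl, rfl⟩, ⟨0, hl₀.trans_le hl⟩, if_pos hl₀⟩
  · rintro ⟨⟨l, hl, rfl⟩, i, hi⟩
    refine ⟨l, ⟨Nat.pos_of_ne_zero fun h => hpq.ne' ?_, hl⟩, rfl⟩
    simpa [pairTuple, h] using hi

theorem exists_eq_pairTuple_of_lt_iff (hpq : p < q) :
    (∃ l < m, f = pairTuple m l p q) ↔
      Monotone f ∧ (∀ i, f i = p ∨ f i = q) ∧ ∃ i, f i = q := by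
  rw [← and_assoc, ← exists_eq_pairTuple_iff hpq]
  constructor
  · rintro ⟨l, hl, rfl⟩
    exact ⟨⟨l, hl.le, rfl⟩, ⟨l, hl⟩, if_neg (lt_irrefl l)⟩
  · rintro ⟨⟨l, hl, rfl⟩, i, hi⟩
    refine ⟨l, hl.lt_of_ne fun h => hpq.ne ?_, rfl⟩
    simpa [pairTuple, h] using hi

theorem pairTuple_bot_le_iff [OrderBot α] (hl : l < m) (hp : p ≠ ⊥) :
    pairTuple m l ⊥ p ≤ pairTuple m l' ⊥ p' ↔ l' ≤ l ∧ p ≤ p' := by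
  constructor
  · intro h
    have hle := h ⟨l, hl⟩
    dsimp only [pairTuple] at hle
    rw [if_neg (lt_irrefl l)] at hle
    split_ifs at hle with hll'
    exacts [absurd (le_bot_iff.1 hle) hp, ⟨not_lt.1 hll', hle⟩]
  · rintro ⟨hll', hpp'⟩ i
    dsimp only [pairTuple]
    split_ifs
    exacts [le_rfl, bot_le, by omega, hpp']

end PairTuple

theorem isTamariCoverTuple_iff {m n : ℕ} {f : Fin m → DyckM 1 n} :
    IsTamariCoverTuple m n f ↔ f ∈ coverTuples (Fin m) (DyckM 1 n) := by
  constructor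
  · rintro ⟨z, l₀, l₁, l₂, p, q, hz, -, hpq, hf⟩
    obtain rfl : z = ⊥ := le_bot_iff.1 (hz ⊥)
    have hpq : p ⋖ q := relCovBy_iff_covBy.1 hpq
    refine ⟨fun i j (hij : (i : ℕ) ≤ j) => ?_, p, q, hpq, fun i => ?_⟩
    · rw [hf, hf]
      split_ifs
      all_goals first | exact le_rfl | exact bot_le | exact hpq.le | omega
    · rw [hf]
      split_ifs <;> simp
  · rintro ⟨hf, p, q, hpq, hval⟩
    have lower₀ : IsLowerSet {i | f i = ⊥} := fun j i hij (hj : f j = ⊥) =>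
      le_bot_iff.1 (hj ▸ hf hij)
    have lower₁ : IsLowerSet {i | f i ≤ p} := fun j i hij hj => (hf hij).trans hj
    obtain ⟨l₀, hl₀, hf₀⟩ := exists_mem_iff_val_lt_of_isLowerSet lower₀
    obtain ⟨l, hl, hf₁⟩ := exists_mem_iff_val_lt_of_isLowerSet lower₁
    have hle : l₀ ≤ l := by
      by_contra! hlt
      have hbot : f ⟨l, hlt.trans_le hl₀⟩ = ⊥ := (hf₀ _).2 hlt
      exact lt_irrefl l ((hf₁ ⟨l, _⟩).1 (hbot.trans_le bot_le))
    refine ⟨⊥, l₀, l - l₀, m - l, p, q, fun x => bot_le (a := x), by omega,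
      relCovBy_iff_covBy.2 hpq, fun i => ?_⟩
    rw [Nat.add_sub_cancel' hle]
    split_ifs with hi₀ hi
    · exact (hf₀ i).2 hi₀
    · refine ((hval i).resolve_left fun h => hi₀ ((hf₀ i).1 h)).resolve_right fun h => ?_
      exact (h ▸ (hf₁ i).2 hi : q ≤ p).not_gt hpq.lt
    · refine ((hval i).resolve_left fun h => hi₀ ((hf₀ i).1 h)).resolve_left fun h => ?_
      exact hi ((hf₁ i).1 h.le)

theorem ceilDiv_mul_add_sub {m l k : ℕ} (a : ℕ) (hl₀ : 0 < l) (hl : l ≤ m) (hk : k < m) :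
    (m * a + l - k) ⌈/⌉ m = if k < l then a + 1 else a := by
  rw [Nat.ceilDiv_eq_add_pred_div]
  split_ifs with hkl
  all_goals
    refine Nat.div_eq_of_lt_le ?_ ?_
    all_goals
      simp only [add_mul, one_mul, mul_comm a m]
      omega

theorem exists_eq_mul_add {m c : ℕ} (hm : 0 < m) (hc : 0 < c) :
    ∃ a l, (0 < l ∧ l ≤ m) ∧ c = m * a + l := by
  refine ⟨(c - 1) / m, (c - 1) % m + 1, ⟨Nat.succ_pos _, Nat.mod_lt _ hm⟩, ?_⟩
  have := Nat.div_add_mod (c - 1) m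
  omega

theorem ceilDiv_sub_le_iff {m c c' : ℕ} (hm : 0 < m) :
    (∀ k < m, (c' - k) ⌈/⌉ m ≤ (c - k) ⌈/⌉ m) ↔ c' ≤ c := by
  refine ⟨fun h => ?_, fun h k _ => (gc_mul_ceilDiv hm).monotone_l (Nat.sub_le_sub_right h k)⟩
  have div_add_mod := Nat.div_add_mod c m
  have hle : (c - c % m) ⌈/⌉ m ≤ c / m := (ceilDiv_le_iff_le_mul hm).2 (by omega)
  have := (ceilDiv_le_iff_le_mul hm).1 ((h _ (Nat.mod_lt c hm)).trans hle)
  omega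

namespace DyckM

variable {n : ℕ}

theorem eq_bot_or_eq_top_of_le_two (hn : n ≤ 2) (u : DyckM 1 n) : u = ⊥ ∨ u = ⊤ := by
  have height_one : u.height 1 = 0 ∨ u.height 1 = 1 := by
    have := u.height_le 1
    omega
  refine height_one.imp (fun h => ext_height fun j hj => ?_) fun h => ext_height fun j hj => ?_
  all_goals
    obtain rfl | rfl : j = 0 ∨ j = 1 := by omega
    all_goals simp [h, hj]

theorem isDrop_top {i : ℕ} (hi₀ : 0 < i) (hi : i < n) : (⊤ : DyckM 1 n).IsDrop i := by
  rw [IsDrop, height_top hi, one_mul]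
  refine ⟨hi₀, n - 1, by omega, fun j hij hjn => ?_, ?_⟩
  · rwa [height_top (by omega), one_mul]
  · rwa [height_of_le _ (by omega)]

theorem eq_top_of_isLeast_Ioi_bot {u : DyckM 1 n} (hu : IsLeast (Set.Ioi ⊥) u) : u = ⊤ := by
  rcases le_or_gt n 2 with hn | hn
  · exact (eq_bot_or_eq_top_of_le_two hn u).resolve_left hu.1.ne'
  · have ascent (i : ℕ) (hi : 0 < i ∧ i < n) : (⊥ : DyckM 1 n).IsAscent i :=
      ⟨hi.1, hi.2, by simp⟩
    have := (exists_isLeast_Ioi_iff.1 ⟨u, hu⟩).unique (ascent 1 (by omega)) (ascent 2 (by omega))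
    omega

theorem eq_bot_of_isGreatest_Iio_top {u : DyckM 1 n} (hu : IsGreatest (Set.Iio ⊤) u) : u = ⊥ := by
  rcases le_or_gt n 2 with hn | hn
  · exact (eq_bot_or_eq_top_of_le_two hn u).resolve_right hu.1.ne
  · have := (exists_isGreatest_Iio_iff.1 ⟨u, hu⟩).unique (isDrop_top one_pos (by omega))
      (isDrop_top two_pos hn)
    omega

/-- The tuple with entries `rectPath 1 n i ⌈(c - k) / m⌉` for `0 ≤ k < m`, which corresponds to
the `m`-Dyck path `rectPath m n i c`. -/
def rectTuple (m n i c : ℕ) : Fin m → DyckM 1 n :=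
  fun k => rectPath 1 n i ((c - k) ⌈/⌉ m)

/-- The tuple `(⊥^(m-s), p^s)` for `p = blockPath 1 n i k 1`, which corresponds to the `m`-Dyck path
`blockPath m n i k s`. -/
def blockTuple (m n i k s : ℕ) : Fin m → DyckM 1 n :=
  pairTuple m (m - s) ⊥ (blockPath 1 n i k 1)

section Tuples

variable {m l : ℕ}

theorem rectTuple_mul_add (i a : ℕ) (hl₀ : 0 < l) (hl : l ≤ m) :
    rectTuple m n i (m * a + l) = pairTuple m l (rectPath 1 n i (a + 1)) (rectPath 1 n i a) := by
  funext k
  rw [rectTuple, pairTuple, ceilDiv_mul_add_sub a hl₀ hl k.2]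
  split_ifs <;> rfl

theorem ceilDiv_sub_le_of_le_mul {c i k : ℕ} (hm : 0 < m) (hc : c ≤ m * i) :
    (c - k) ⌈/⌉ m ≤ 1 * i :=
  ((ceilDiv_le_iff_le_mul hm).2 ((Nat.sub_le c k).trans hc)).trans_eq (one_mul i).symm

theorem rectTuple_le_iff {p p' : ℕ × ℕ} (hm : 0 < m) (hp : p ∈ rectIndices m n)
    (hp' : p' ∈ rectIndices m n) :
    rectTuple m n p.1 p.2 ≤ rectTuple m n p'.1 p'.2 ↔ p.1 = p'.1 ∧ p'.2 ≤ p.2 := by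
  obtain ⟨i, c⟩ := p
  obtain ⟨i', c'⟩ := p'
  obtain ⟨hi, -, hc⟩ := hp
  obtain ⟨hi', hc₀', hc'⟩ := hp'
  have entry_le_iff (k : Fin m) : rectTuple m n i c k ≤ rectTuple m n i' c' k ↔
      (c' - k) ⌈/⌉ m = 0 ∨ i = i' ∧ (c' - k) ⌈/⌉ m ≤ (c - k) ⌈/⌉ m :=
    rectPath_le_iff hi hi'.2 (ceilDiv_sub_le_of_le_mul hm hc) (ceilDiv_sub_le_of_le_mul hm hc')
  rw [← ceilDiv_sub_le_iff hm]
  refine ⟨fun h => ⟨?_, fun k hk => ?_⟩, fun ⟨hii', h⟩ k =>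
    (entry_le_iff k).2 (.inr ⟨hii', h k k.2⟩)⟩
  · refine (((entry_le_iff ⟨0, hm⟩).1 (h _)).resolve_left fun h₀ => ?_).1
    have := (ceilDiv_le_iff_le_mul hm).1 h₀.le
    simp only [Nat.sub_zero, mul_zero] at this
    omega
  · exact ((entry_le_iff ⟨k, hk⟩).1 (h _)).elim (fun h => h ▸ Nat.zero_le _) And.right

theorem mem_image_rectTuple_iff {f : Fin m → DyckM 1 n} (hm : 0 < m) :
    f ∈ (fun p => rectTuple m n p.1 p.2) '' rectIndices m n ↔
      Monotone f ∧ ∃ p q, IsLeast (Set.Ioi p) q ∧ (∀ i, f i = p ∨ f i = q) ∧ ∃ i, f i = p := by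
  constructor
  · rintro ⟨⟨i, c⟩, ⟨hi, hc₀, hc⟩, rfl⟩
    obtain ⟨a, l, hl, rfl⟩ := exists_eq_mul_add hm hc₀
    have hai : a < 1 * i := by
      have : m * a < m * i := (Nat.lt_add_of_pos_right hl.1).trans_le hc
      rw [one_mul]
      exact Nat.lt_of_mul_lt_mul_left this
    have least := isLeast_Ioi_rectPath hi hai
    obtain ⟨hf, h⟩ := (exists_eq_pairTuple_of_pos_iff least.1).1
      ⟨l, hl, rectTuple_mul_add i a hl.1 hl.2⟩
    exact ⟨hf, _, _, least, h⟩
  · rintro ⟨hf, p, q, hpq, h⟩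
    obtain ⟨l, hl, rfl⟩ := (exists_eq_pairTuple_of_pos_iff hpq.1).2 ⟨hf, h⟩
    obtain ⟨⟨i, c⟩, ⟨hi, hc₀, hc⟩, rfl⟩ := exists_isLeast_Ioi_iff_mem_image.1 ⟨q, hpq⟩
    obtain ⟨a, rfl⟩ : ∃ a, c = a + 1 := ⟨c - 1, by dsimp only at hc₀; omega⟩
    obtain rfl := hpq.unique (isLeast_Ioi_rectPath hi hc)
    refine ⟨(i, m * a + l), ⟨hi, by dsimp only; omega, ?_⟩, rectTuple_mul_add i a hl.1 hl.2⟩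
    have := Nat.mul_le_mul_left m ((Nat.succ_le_iff.1 hc).trans_eq (one_mul i))
    rw [Nat.succ_eq_add_one, mul_add, mul_one] at this
    exact (Nat.add_le_add_left hl.2 _).trans this

theorem mem_blockIndices_one_iff {i k s : ℕ} :
    (i, k, s) ∈ blockIndices 1 n ↔ (i < k ∧ k < n) ∧ s = 1 :=
  ⟨fun ⟨h, hs₀, hs⟩ => ⟨h, le_antisymm hs hs₀⟩, fun ⟨h, hs⟩ => ⟨h, one_pos.trans_eq hs.symm, hs.le⟩⟩

theorem exists_isGreatest_Iio_blockPath_one {i k : ℕ} (hik : i < k) (hk : k < n) :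
    ∃ w, IsGreatest (Set.Iio (blockPath 1 n i k 1)) w :=
  exists_isGreatest_Iio_iff_mem_image.2
    ⟨(i, k, 1), mem_blockIndices_one_iff.2 ⟨⟨hik, hk⟩, rfl⟩, rfl⟩

theorem blockTuple_le_iff {p p' : ℕ × ℕ × ℕ} (hp : p ∈ blockIndices m n)
    (hp' : p' ∈ blockIndices m n) :
    blockTuple m n p.1 p.2.1 p.2.2 ≤ blockTuple m n p'.1 p'.2.1 p'.2.2 ↔
      p.1 = p'.1 ∧ p.2.1 ≤ p'.2.1 ∧ p.2.2 ≤ p'.2.2 := by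
  obtain ⟨i, k, s⟩ := p
  obtain ⟨i', k', s'⟩ := p'
  obtain ⟨⟨hik, hk⟩, hs₀, hs⟩ := hp
  obtain ⟨⟨-, hk'⟩, -, hs'⟩ := hp'
  dsimp only at *
  obtain ⟨w, hw⟩ := exists_isGreatest_Iio_blockPath_one hik hk
  have hne : blockPath 1 n i k 1 ≠ ⊥ := (bot_le.trans_lt hw.1).ne'
  rw [blockTuple, blockTuple, pairTuple_bot_le_iff (by omega) hne,
    blockPath_le_iff hik hk one_pos le_rfl hk' le_rfl]
  omega

theorem mem_image_blockTuple_iff {f : Fin m → DyckM 1 n} :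
    f ∈ (fun p => blockTuple m n p.1 p.2.1 p.2.2) '' blockIndices m n ↔
      Monotone f ∧ ∃ p, (∃ c, IsGreatest (Set.Iio p) c) ∧
        (∀ i, f i = ⊥ ∨ f i = p) ∧ ∃ i, f i = p := by
  constructor
  · rintro ⟨⟨i, k, s⟩, ⟨⟨hik, hk⟩, hs₀, hs⟩, rfl⟩
    obtain ⟨w, hw⟩ := exists_isGreatest_Iio_blockPath_one hik hk
    obtain ⟨hf, h⟩ := (exists_eq_pairTuple_of_lt_iff (bot_le.trans_lt (Set.mem_Iio.1 hw.1))).1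
      ⟨m - s, Nat.sub_lt_self hs₀ hs, rfl⟩
    exact ⟨hf, _, ⟨w, hw⟩, h⟩
  · rintro ⟨hf, p, ⟨c, hc⟩, h⟩
    obtain ⟨l, hl, rfl⟩ := (exists_eq_pairTuple_of_lt_iff (bot_le.trans_lt hc.1)).2 ⟨hf, h⟩
    obtain ⟨⟨i, k, s⟩, hp, rfl⟩ := exists_isGreatest_Iio_iff_mem_image.1 ⟨c, hc⟩
    obtain ⟨hik, rfl⟩ := mem_blockIndices_one_iff.1 hp
    refine ⟨(i, k, m - l), ⟨hik, Nat.sub_pos_of_lt hl, Nat.sub_le m l⟩, ?_⟩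
    dsimp only [blockTuple]
    rw [Nat.sub_sub_self hl.le]

theorem rectPath_le_iff_of_mem {p p' : ℕ × ℕ} (hp : p ∈ rectIndices m n)
    (hp' : p' ∈ rectIndices m n) :
    rectPath m n p.1 p.2 ≤ rectPath m n p'.1 p'.2 ↔ p.1 = p'.1 ∧ p'.2 ≤ p.2 :=
  (rectPath_le_iff hp.1 hp'.1.2 hp.2.2 hp'.2.2).trans (or_iff_right hp'.2.1.ne')

theorem blockPath_le_iff_of_mem {p p' : ℕ × ℕ × ℕ} (hp : p ∈ blockIndices m n)
    (hp' : p' ∈ blockIndices m n) :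
    blockPath m n p.1 p.2.1 p.2.2 ≤ blockPath m n p'.1 p'.2.1 p'.2.2 ↔
      p.1 = p'.1 ∧ p.2.1 ≤ p'.2.1 ∧ p.2.2 ≤ p'.2.2 :=
  blockPath_le_iff hp.1.1 hp.1.2 hp.2.1 hp.2.2 hp'.1.2 hp'.2.2

theorem range_val_meetIrred : Set.range (Subtype.val : {u // RelMeetIrred (TamariLe m n) u} → _) =
    (fun p => rectPath m n p.1 p.2) '' rectIndices m n := by
  rw [Subtype.range_coe_subtype]
  exact Set.ext fun u => relMeetIrred_iff.trans exists_isLeast_Ioi_iff_mem_image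

theorem range_val_joinIrred : Set.range (Subtype.val : {u // RelJoinIrred (TamariLe m n) u} → _) =
    (fun p => blockPath m n p.1 p.2.1 p.2.2) '' blockIndices m n := by
  rw [Subtype.range_coe_subtype]
  exact Set.ext fun u => relJoinIrred_iff.trans exists_isGreatest_Iio_iff_mem_image

theorem setOf_isTamariCoverTuple :
    {f | IsTamariCoverTuple m n f} = coverTuples (Fin m) (DyckM 1 n) :=
  Set.ext fun _ => isTamariCoverTuple_iff

theorem range_val_meetIrred_tamariMCover (hm : 0 < m) :
    Set.range (fun f : {f // RelMeetIrred (TamariMCoverLe m n) f} => f.1.1) =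
      (fun p => rectTuple m n p.1 p.2) '' rectIndices m n := by
  refine (range_val_relMeetIrred_subtype (p := IsTamariCoverTuple m n)).trans (Set.ext fun f => ?_)
  rw [mem_image_rectTuple_iff hm, ← mem_coverTuples_and_exists_isLeast_iff
    (fun _ => eq_top_of_isLeast_Ioi_bot) fun _ => eq_bot_of_isGreatest_Iio_top,
    ← setOf_isTamariCoverTuple]
  rfl

theorem range_val_joinIrred_tamariMCover :
    Set.range (fun f : {f // RelJoinIrred (TamariMCoverLe m n) f} => f.1.1) =
      (fun p => blockTuple m n p.1 p.2.1 p.2.2) '' blockIndices m n := by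
  refine (range_val_relJoinIrred_subtype (p := IsTamariCoverTuple m n)).trans (Set.ext fun f => ?_)
  rw [mem_image_blockTuple_iff, ← mem_coverTuples_and_exists_isGreatest_iff,
    ← setOf_isTamariCoverTuple]
  rfl

end Tuples

end DyckM

/-- The subposets of meet-irreducible (resp. join-irreducible) elements of the m-Tamari
lattice `T_n^(m)` and of the m-cover poset `T_n^⟨m⟩` are order-isomorphic. -/
theorem stmt_16 (m n : ℕ) (hm : 0 < m) (hn : 0 < n) :
    (∃ e : {u : DyckM m n // RelMeetIrred (TamariLe m n) u} ≃
        {f : TamariMCover m n // RelMeetIrred (TamariMCoverLe m n) f},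
      ∀ x y, TamariLe m n x.1 y.1 ↔ TamariMCoverLe m n (e x).1 (e y).1) ∧
    (∃ e : {u : DyckM m n // RelJoinIrred (TamariLe m n) u} ≃
        {f : TamariMCover m n // RelJoinIrred (TamariMCoverLe m n) f},
      ∀ x y, TamariLe m n x.1 y.1 ↔ TamariMCoverLe m n (e x).1 (e y).1) := by
  have val_injective {r : TamariMCover m n → Prop} :
      Function.Injective fun f : {f // r f} => f.1.1 :=
    Subtype.val_injective.comp Subtype.val_injective
  constructor
  · exact exists_equiv_of_parametrizations Subtype.val_injective val_injective
      DyckM.range_val_meetIrred (DyckM.range_val_meetIrred_tamariMCover hm) fun p hp p' hp' =>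
        (DyckM.rectPath_le_iff_of_mem hp hp').trans (DyckM.rectTuple_le_iff hm hp hp').symm
  · exact exists_equiv_of_parametrizations Subtype.val_injective val_injective
      DyckM.range_val_joinIrred DyckM.range_val_joinIrred_tamariMCover fun p hp p' hp' =>
        (DyckM.blockPath_le_iff_of_mem hp hp').trans (DyckM.blockTuple_le_iff hp hp').symm
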